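/- arXiv:1805.10553 — 11 statements merged into one kernel-verified Lean document; each statement's English description precedes it below -/
import Mathlib

section
/- Let z₀ > 1 and C > 0. Let f : [z₀, ∞) → ℝ be a twice continuously differentiable positive function satisfying the perturbed rotationally symmetric translator ODE −f'(z) = (1 + a(z))·f''(z)/(1 + f'(z)²) − 1/f(z) + b(z) for all z ≥ z₀, where a, b : ℝ → ℝ are continuous with |a(z)| + |b(z)| ≤ C/z^10 for all z ≥ z₀, and suppose f(z)/√(2z) → 1 as z → ∞. Then there exists Λ ≥ z₀ such that f'(z) > 0 for all z ≥ Λ; in particular f is strictly increasing on [Λ, ∞). -/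
open Set Filter

/-- The rotationally symmetric part of the cylindrical end of the translator is
eventually increasing: a positive `C²` solution of the perturbed rotationally
symmetric translator ODE asymptotic to `√(2z)` has eventually positive derivative. -/
theorem eventually_increasing_of_perturbed_translator_ode
    (z₀ C : ℝ) (hz₀ : 1 < z₀) (hC : 0 < C)
    (f f' f'' a b : ℝ → ℝ)
    (hf : ∀ z ∈ Ici z₀, HasDerivWithinAt f (f' z) (Ici z₀) z)
    (hf'd : ∀ z ∈ Ici z₀, HasDerivWithinAt f' (f'' z) (Ici z₀) z)
    (hf'' : ContinuousOn f'' (Ici z₀))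
    (hfpos : ∀ z ∈ Ici z₀, 0 < f z)
    (ha : Continuous a) (hb : Continuous b)
    (hab : ∀ z ∈ Ici z₀, |a z| + |b z| ≤ C / z ^ 10)
    (hode : ∀ z ∈ Ici z₀,
      -f' z = (1 + a z) * f'' z / (1 + f' z ^ 2) - 1 / f z + b z)
    (hlim : Tendsto (fun z => f z / Real.sqrt (2 * z)) atTop (nhds 1)) :
    ∃ Λ, z₀ ≤ Λ ∧ (∀ z ∈ Ici Λ, 0 < f' z) ∧ StrictMonoOn f (Ici Λ) := by
  have hev : ∀ᶠ z in atTop, 1 / 2 < f z / Real.sqrt (2 * z) ∧ f z / Real.sqrt (2 * z) < 2 :=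
    (hlim.eventually (lt_mem_nhds (by norm_num))).and
      (hlim.eventually (gt_mem_nhds (by norm_num)))
  obtain ⟨N, hN⟩ := eventually_atTop.1 hev
  obtain ⟨L, hLz, hLN, hLC⟩ : ∃ L, z₀ < L ∧ N ≤ L ∧ 4 * C < L := by
    refine ⟨max z₀ (max N (4 * C)) + 1, ?_, ?_, ?_⟩
    · linarith [le_max_left z₀ (max N (4 * C))]
    · linarith [le_max_right z₀ (max N (4 * C)), le_max_left N (4 * C)]
    · linarith [le_max_right z₀ (max N (4 * C)), le_max_right N (4 * C)]
  have hlow : ∀ z, L ≤ z → Real.sqrt (2 * z) < 2 * f z := by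
    intro z hz
    have h := (hN z (hLN.trans hz)).1
    have hs : 0 < Real.sqrt (2 * z) := Real.sqrt_pos.2 (by linarith)
    rw [lt_div_iff₀ hs] at h
    linarith
  have hup : ∀ z, L ≤ z → f z < 4 * z := by
    intro z hz
    have h := (hN z (hLN.trans hz)).2
    have hs : 0 < Real.sqrt (2 * z) := Real.sqrt_pos.2 (by linarith)
    rw [div_lt_iff₀ hs] at h
    have : Real.sqrt (2 * z) ≤ 2 * z := by
      rw [Real.sqrt_le_left (by linarith)]
      nlinarith
    linarith
  have hder : ∀ z, L ≤ z → HasDerivAt f (f' z) z := fun z hz =>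
    (hf z (by simp only [mem_Ici]; linarith)).hasDerivAt (Ici_mem_nhds (by linarith))
  have hder' : ∀ z, L ≤ z → HasDerivAt f' (f'' z) z := fun z hz =>
    (hf'd z (by simp only [mem_Ici]; linarith)).hasDerivAt (Ici_mem_nhds (by linarith))
  have hkey : ∀ z, L ≤ z → f' z ≤ 0 → 0 < f'' z := by
    intro z hz hneg
    have hzm : z ∈ Ici z₀ := by simp only [mem_Ici]; linarith
    have h1 := hode z hzm
    have h2 := hab z hzm
    have hfp := hfpos z hzm
    have hz1 : 1 ≤ z := by linarith
    have hz2 : C / z ^ 10 ≤ C / z ^ 2 := by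
      apply div_le_div_of_nonneg_left hC.le (by positivity)
      exact pow_le_pow_right₀ hz1 (by norm_num)
    have hz3 : C / z ^ 2 < 1 / (4 * z) := by
      rw [div_lt_div_iff₀ (by positivity) (by positivity)]
      nlinarith
    have hz4 : 1 / (4 * z) < 1 / f z := one_div_lt_one_div_of_lt hfp (hup z hz)
    have hz5 : 1 / (4 * z) < 1 := by
      rw [div_lt_one (by positivity)]; linarith
    have hA : 0 < 1 + a z := by linarith [neg_abs_le (a z), abs_nonneg (b z)]
    have hB : b z < 1 / f z := by linarith [le_abs_self (b z), abs_nonneg (a z)]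
    have hpos : 0 < (1 + a z) * f'' z / (1 + f' z ^ 2) := by linarith
    have hpos2 : 0 < (1 + a z) * f'' z := by
      by_contra hcon
      have := div_nonpos_of_nonpos_of_nonneg (not_lt.1 hcon)
        (show (0:ℝ) ≤ 1 + f' z ^ 2 by positivity)
      linarith
    exact (pos_iff_pos_of_mul_pos hpos2).1 hA
  obtain ⟨M, hLM, hM⟩ : ∃ M, L ≤ M ∧ 0 < f' M := by
    by_contra hcon
    push Not at hcon
    have hanti : AntitoneOn f (Ici L) := by
      apply antitoneOn_of_deriv_nonpos (convex_Ici L)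
      · exact fun z hz => (hder z hz).continuousAt.continuousWithinAt
      · intro z hz
        exact (hder z (interior_subset hz)).differentiableAt.differentiableWithinAt
      · intro z hz
        rw [(hder z (interior_subset hz)).deriv]
        exact hcon z (interior_subset hz)
    have hz : L ≤ L + 2 * f L ^ 2 := by nlinarith [sq_nonneg (f L)]
    have h1 := hanti (mem_Ici.2 le_rfl) (mem_Ici.2 hz) hz
    have h2 := hlow _ hz
    have h3 : 2 * f L < Real.sqrt (2 * (L + 2 * f L ^ 2)) := by
      apply Real.lt_sqrt_of_sq_lt
      nlinarith
    linarith
  have hnn : ∀ z, M ≤ z → 0 ≤ f' z := by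
    intro z hz
    have := image_le_of_deriv_right_lt_deriv_boundary' (f := fun x => - f' x)
      (f' := fun x => - f'' x) (a := M) (b := z) (B := fun _ => 0) (B' := fun _ => 0)
      (fun x hx => (hder' x (hLM.trans hx.1)).continuousAt.neg.continuousWithinAt)
      (fun x hx => (hder' x (hLM.trans hx.1)).neg.hasDerivWithinAt)
      (by simpa using hM.le) continuousOn_const
      (fun x _ => hasDerivWithinAt_const _ _ _)
      (fun x hx h => by
        have := hkey x (hLM.trans hx.1) (by simp at h; exact h.le)
        simpa using this) (right_mem_Icc.2 hz)
    simpa using this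
  have hpos : ∀ z ∈ Ici M, 0 < f' z := by
    intro z hz
    have hz : M ≤ z := hz
    by_contra hcon
    have h0 : f' z = 0 := le_antisymm (not_lt.1 hcon) (hnn z hz)
    have hlt : M < z := by
      rcases hz.eq_or_lt with h | h
      · rw [h] at hM; linarith
      · exact h
    have hmin : IsLocalMin f' z := by
      filter_upwards [Ici_mem_nhds hlt] with x hx
      rw [h0]; exact hnn x hx
    have := hmin.hasDerivAt_eq_zero (hder' z (hLM.trans hz))
    linarith [hkey z (hLM.trans hz) h0.le]
  refine ⟨M, by linarith, hpos, ?_⟩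
  apply strictMonoOn_of_deriv_pos (convex_Ici M)
  · exact fun z hz => (hder z (hLM.trans hz)).continuousAt.continuousWithinAt
  · intro z hz
    have hz' : z ∈ Ici M := interior_subset hz
    rw [(hder z (hLM.trans hz')).deriv]
    exact hpos z hz'
end

section
/- There exists s₁ ≥ s₀ such that φ(s) ≤ s + 1/s⁹ for all s ≥ s₁. -/
open Set Filter

lemma ricc_aux (C s g d t : ℝ) (hC : 0 < C) (hs : 1 < s) (hsC : 100 * C ≤ s)
    (hb : |g| + |d| ≤ C / s ^ 10) (ht : s ≤ t) :
    (1 + t ^ 2) * (1 + g - (1 / s + d) * t) ≤ 1 / 2 := by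
  have hs0 : 0 < s := by linarith
  obtain ⟨e, he⟩ : ∃ e, e = C / s ^ 10 := ⟨_, rfl⟩
  rw [← he] at hb
  have he0 : 0 < e := by rw [he]; positivity
  have he3 : e * s ^ 3 ≤ 1 / 100 := by
    have h1 : e * s ^ 3 = C / s ^ 7 := by rw [he]; field_simp
    rw [h1, div_le_iff₀ (by positivity)]
    have h2 : s ≤ s ^ 7 := le_self_pow₀ hs.le (by norm_num)
    linarith
  have hg : g ≤ e := by linarith [le_abs_self g, abs_nonneg d]
  have hd : -d ≤ e := by linarith [neg_le_abs d, abs_nonneg g]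
  obtain ⟨u, hu⟩ : ∃ u, u = t / s := ⟨_, rfl⟩
  have htu : t = u * s := by rw [hu]; field_simp
  have hu1 : 1 ≤ u := by rw [hu, le_div_iff₀ hs0]; linarith
  have hbr : 1 + g - (1 / s + d) * t ≤ 1 + e + e * s * u - u := by
    have h1 : (1 / s + d) * t = u + d * t := by rw [hu]; ring
    have h2 : -d * t ≤ e * t := mul_le_mul_of_nonneg_right hd (by linarith)
    rw [h1]
    have h3 : e * t = e * s * u := by rw [htu]; ring
    linarith
  have hs13 : s ≤ s ^ 3 := le_self_pow₀ hs.le (by norm_num)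
  have hes : e * s ≤ 1 / 100 := (mul_le_mul_of_nonneg_left hs13 he0.le).trans he3
  have hee : e ≤ e * s := by nlinarith
  have hesp : 0 < e * s := by positivity
  have hp : 0 < 1 + t ^ 2 := by positivity
  rcases le_total u 2 with h | h
  · have h1 : 1 + g - (1 / s + d) * t ≤ 3 * (e * s) := by nlinarith
    have h2 : 1 + t ^ 2 ≤ 5 * s ^ 2 := by
      have : t ≤ 2 * s := by rw [htu]; nlinarith
      nlinarith
    calc _ ≤ (1 + t ^ 2) * (3 * (e * s)) := mul_le_mul_of_nonneg_left h1 hp.le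
      _ ≤ (5 * s ^ 2) * (3 * (e * s)) := mul_le_mul_of_nonneg_right h2 (by positivity)
      _ = 15 * (e * s ^ 3) := by ring
      _ ≤ 1 / 2 := by linarith
  · have h1 : 1 + g - (1 / s + d) * t ≤ 0 := by nlinarith
    linarith [mul_nonpos_of_nonneg_of_nonpos hp.le h1]

/-- Upper bound `φ(s) ≤ s + s⁻⁹` for large `s`, for a solution of the perturbed
Riccati-type equation for the slope of the translator's graphical end. -/
theorem riccati_upper_bound
    (s₀ C : ℝ) (hs₀ : 1 < s₀) (hC : 0 < C)
    (γ δ φ φ' : ℝ → ℝ)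
    (hγ : Continuous γ) (hδ : Continuous δ)
    (hbound : ∀ s ∈ Ici s₀, |γ s| + |δ s| ≤ C / s ^ 10)
    (hφ : ∀ s ∈ Ici s₀, HasDerivWithinAt φ (φ' s) (Ici s₀) s)
    (hφ' : ContinuousOn φ' (Ici s₀))
    (heq : ∀ s ∈ Ici s₀,
      φ' s = (1 + φ s ^ 2) * (1 + γ s - (1 / s + δ s) * φ s)) :
    ∃ s₁, s₀ ≤ s₁ ∧ ∀ s ≥ s₁, φ s ≤ s + 1 / s ^ 9 := by
  obtain ⟨S, hS⟩ : ∃ S, S = s₀ + 100 * C := ⟨_, rfl⟩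
  have hS0 : s₀ ≤ S := by linarith
  have key : ∀ s, S ≤ s → s ≤ φ s → φ' s ≤ 1 / 2 := by
    intro s hs h
    have hm : s ∈ Ici s₀ := hS0.trans hs
    rw [heq s hm]
    exact ricc_aux C s _ _ _ hC (by linarith) (by linarith) (hbound s hm) h
  have hcont : ∀ a b, S ≤ a → ContinuousOn φ (Icc a b) := fun a b ha x hx =>
    ((hφ x (hS0.trans (ha.trans hx.1))).continuousWithinAt).mono
      (fun y hy => hS0.trans (ha.trans hy.1))
  have hder : ∀ a b, S ≤ a → ∀ x ∈ Ico a b, HasDerivWithinAt φ (φ' x) (Ici x) x :=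
    fun a b ha x hx => (hφ x (hS0.trans (ha.trans hx.1))).mono
      (fun y hy => hS0.trans (ha.trans (hx.1.trans hy)))
  have step1 : ∃ s₁, S ≤ s₁ ∧ φ s₁ ≤ s₁ := by
    by_contra! hcon
    obtain ⟨b, hb⟩ : ∃ b, b = S + 4 * |φ S - S| := ⟨_, rfl⟩
    have hSb : S ≤ b := by rw [hb]; linarith [abs_nonneg (φ S - S)]
    have := image_le_of_deriv_right_lt_deriv_boundary' (hcont S b le_rfl) (hder S b le_rfl)
      (B := fun x => φ S + (3 / 4) * (x - S)) (B' := fun _ => 3 / 4) (by simp)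
      (by fun_prop)
      (fun x _ => by
        have := (((hasDerivAt_id x).sub_const S).const_mul (3 / 4 : ℝ)).const_add (φ S)
        simpa using this.hasDerivWithinAt)
      (fun x hx _ => by
        have := key x hx.1 (hcon x hx.1).le
        linarith)
      (right_mem_Icc.2 hSb)
    have h2 := hcon b hSb
    linarith [le_abs_self (φ S - S)]
  obtain ⟨s₁, h1, h2⟩ := step1
  refine ⟨s₁, hS0.trans h1, fun s hs => ?_⟩
  have := image_le_of_deriv_right_lt_deriv_boundary' (hcont s₁ s h1) (hder s₁ s h1)
      (B := fun x => x) (B' := fun _ => 1) h2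
      (by fun_prop)
      (fun x _ => (hasDerivAt_id x).hasDerivWithinAt)
      (fun x hx hxe => by
        have := key x (h1.trans hx.1) hxe.ge
        linarith)
      (right_mem_Icc.2 hs)
  have hp : 0 < s := by linarith
  have : 0 ≤ 1 / s ^ 9 := by positivity
  linarith
end

section
/- For every ε > 0 there exists s₁ ≥ s₀ such that φ(s) ≥ (1 − ε)·s for all s ≥ s₁. -/
open Set Filter

/-- Lower bound `φ(s) ≥ (1 − ε)s` for large `s`, for a solution of the perturbed
Riccati-type equation for the slope of the translator's graphical end. -/
theorem riccati_lower_bound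
    (s₀ C : ℝ) (hs₀ : 1 < s₀) (hC : 0 < C)
    (γ δ φ φ' : ℝ → ℝ)
    (hγ : Continuous γ) (hδ : Continuous δ)
    (hbound : ∀ s ∈ Ici s₀, |γ s| + |δ s| ≤ C / s ^ 10)
    (hφ : ∀ s ∈ Ici s₀, HasDerivWithinAt φ (φ' s) (Ici s₀) s)
    (hφ' : ContinuousOn φ' (Ici s₀))
    (heq : ∀ s ∈ Ici s₀,
      φ' s = (1 + φ s ^ 2) * (1 + γ s - (1 / s + δ s) * φ s)) :
    ∀ ε > (0 : ℝ), ∃ s₁, s₀ ≤ s₁ ∧ ∀ s ≥ s₁, (1 - ε) * s ≤ φ s := by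
  intro ε₀ hε₀
  obtain ⟨ε, hε, hε2, hεle⟩ : ∃ ε : ℝ, 0 < ε ∧ ε ≤ 1 / 2 ∧ ε ≤ ε₀ :=
    ⟨min ε₀ (1 / 2), by positivity, min_le_right _ _, min_le_left _ _⟩
  set S : ℝ := s₀ + 4 * C / ε + 8 / ε with hS
  have h4 : 0 < 4 * C / ε := by positivity
  have h8 : 0 < 8 / ε := by positivity
  have hSs : s₀ ≤ S := by linarith
  -- key lower bound below the barrier
  have key : ∀ s, S ≤ s → φ s ≤ (1 - ε) * s → (1 + φ s ^ 2) * (ε / 2) ≤ φ' s := by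
    intro s hs hle
    have hs0 : s₀ ≤ s := hSs.trans hs
    have hs1 : 1 < s := by linarith
    have hb := hbound s hs0
    have hD : C / s ^ 10 * s ≤ ε / 4 := by
      have h1 : 4 * C / ε ≤ s := by linarith
      rw [div_le_iff₀ hε] at h1
      have h2 : s * s ≤ s ^ 10 := by
        have : s ^ 2 ≤ s ^ 10 := pow_le_pow_right₀ hs1.le (by norm_num)
        nlinarith
      rw [div_mul_eq_mul_div, div_le_iff₀ (by positivity)]
      nlinarith
    have hg := abs_nonneg (γ s)
    have hd := abs_nonneg (δ s)
    have hg1 := neg_abs_le (γ s)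
    have hd1 := neg_abs_le (δ s)
    have hd2 := le_abs_self (δ s)
    have hgs : |γ s| * s + |δ s| * s ≤ ε / 4 := by nlinarith
    have hγs : |γ s| ≤ ε / 4 := by nlinarith
    have hδs : |δ s| * s ≤ ε / 4 := by nlinarith
    have hpos : 0 ≤ 1 / s + δ s := by
      have : 0 ≤ (1 + δ s * s) / s := div_nonneg (by nlinarith) (by linarith)
      have e : (1 + δ s * s) / s = 1 / s + δ s := by field_simp
      linarith
    have h1 : (1 / s + δ s) * φ s ≤ (1 - ε) * (1 + δ s * s) := by
      calc (1 / s + δ s) * φ s ≤ (1 / s + δ s) * ((1 - ε) * s) :=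
            mul_le_mul_of_nonneg_left hle hpos
        _ = (1 - ε) * (1 + δ s * s) := by field_simp
    have hδ3 : δ s * s ≤ ε / 4 := by nlinarith
    rw [heq s hs0]
    apply mul_le_mul_of_nonneg_left _ (by positivity)
    nlinarith
  have hder : ∀ s, S ≤ s → HasDerivWithinAt φ (φ' s) (Ici s) s := fun s hs =>
    (hφ s (hSs.trans hs)).mono (Ici_subset_Ici.2 (hSs.trans hs))
  have hcont : ContinuousOn φ (Ici S) := fun s hs =>
    ((hφ s (hSs.trans hs)).continuousWithinAt).mono (Ici_subset_Ici.2 hSs)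
  -- the barrier is reached
  have hreach : ∃ s, S ≤ s ∧ (1 - ε) * s ≤ φ s := by
    by_contra! hcon
    have hpi := Real.pi_pos
    set T : ℝ := S + 2 * Real.pi / ε with hT
    have hST : S ≤ T := by have : 0 < 2 * Real.pi / ε := by positivity
                           linarith
    have := image_le_of_deriv_right_le_deriv_boundary
      (f := fun s => Real.arctan (φ S) + (ε / 2) * (s - S)) (f' := fun _ => ε / 2)
      (B := fun s => Real.arctan (φ s)) (B' := fun s => 1 / (1 + φ s ^ 2) * φ' s)
      (a := S) (b := T) (by fun_prop)
      (fun x _ => by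
        have h := (((hasDerivAt_id x).sub_const S).const_mul (ε / 2)).const_add
          (Real.arctan (φ S))
        simpa using h.hasDerivWithinAt)
      (by simp)
      (Real.continuous_arctan.comp_continuousOn (hcont.mono Icc_subset_Ici_self))
      (fun x hx => (hder x hx.1).arctan)
      (fun x hx => by
        have h := key x hx.1 (hcon x hx.1).le
        have hp : 0 < 1 + φ x ^ 2 := by positivity
        rw [one_div_mul_eq_div, le_div_iff₀ hp]
        linarith)
      (right_mem_Icc.2 hST)
    have e : ε / 2 * (T - S) = Real.pi := by rw [hT]; field_simp; ring
    simp only [e] at this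
    linarith [Real.arctan_lt_pi_div_two (φ T), Real.neg_pi_div_two_lt_arctan (φ S)]
  obtain ⟨s₁, hs₁, h₁⟩ := hreach
  refine ⟨s₁, hSs.trans hs₁, fun s hs => ?_⟩
  have hfin : (1 - ε) * s ≤ φ s := by
    refine image_le_of_deriv_right_lt_deriv_boundary'
      (f := fun s => (1 - ε) * s) (f' := fun _ => 1 - ε) (B := φ) (B' := φ')
      (a := s₁) (b := s) (by fun_prop)
      (fun x _ => by simpa using ((hasDerivAt_id x).const_mul (1 - ε)).hasDerivWithinAt)
      h₁ (hcont.mono fun x hx => hs₁.trans hx.1)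
      (fun x hx => hder x (hs₁.trans hx.1)) (fun x hx hxe => ?_) (right_mem_Icc.2 hs)
    have hx : S ≤ x := hs₁.trans hx.1
    have hxe : (1 - ε) * x = φ x := hxe
    have h := key x hx hxe.ge
    rw [← hxe] at h
    have hx1 : 1 < x := by linarith
    have h8x : 8 / ε ≤ x := by linarith
    rw [div_le_iff₀ hε] at h8x
    have hx2 : 8 ≤ x ^ 2 * ε := by nlinarith
    have hq : 1 / 4 ≤ (1 - ε) ^ 2 := by nlinarith
    have : 2 ≤ (1 - ε) ^ 2 * (x ^ 2 * ε) := by nlinarith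
    show 1 - ε < φ' x
    nlinarith
  have : (1 - ε₀) * s ≤ (1 - ε) * s :=
    mul_le_mul_of_nonneg_right (by linarith) (by linarith)
  linarith
end

section
/- φ(s) − s → 0 as s → ∞. -/
open Set Filter

lemma barrier_aux (g g' : ℝ → ℝ) (c : ℝ) (hc : 0 < c)
    (hd : ∀ᶠ s in atTop, HasDerivAt g (g' s) s)
    (h : ∀ᶠ s in atTop, g s ≤ 0 → c ≤ g' s) :
    ∀ᶠ s in atTop, 0 ≤ g s := by
  obtain ⟨S, hS⟩ := eventually_atTop.1 (hd.and h)
  have h1 : ∃ T, S ≤ T ∧ 0 ≤ g T := by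
    by_contra! hcon
    have hle : ∀ U, S ≤ U → -g U ≤ -g S - c / 2 * (U - S) := by
      intro U hU
      refine image_le_of_deriv_right_lt_deriv_boundary (f := fun s => -g s)
        (f' := fun s => -g' s) (a := S) (b := U)
        (B := fun s => -g S - c / 2 * (s - S)) (B' := fun _ => -(c / 2)) ?_ ?_ ?_ ?_ ?_
        (right_mem_Icc.2 hU)
      · intro x hx
        exact ((hS x hx.1).1.continuousAt.neg).continuousWithinAt
      · intro x hx
        exact ((hS x hx.1).1.neg).hasDerivWithinAt
      · simp
      · intro x
        have := (((hasDerivAt_id x).sub_const S).const_mul (c/2)).const_sub (-g S)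
        simpa using this
      · intro x hx _
        have := (hS x hx.1).2 (hcon x hx.1).le
        linarith
    have hp : 0 ≤ 2 * (-g S) / c := by
      have := hcon S le_rfl
      apply div_nonneg <;> linarith
    have h2 := hle (S + 2 * (-g S) / c) (by linarith)
    have h3 := hcon (S + 2 * (-g S) / c) (by linarith)
    have h4 : c / 2 * (S + 2 * (-g S) / c - S) = - g S := by field_simp; ring
    linarith
  obtain ⟨T, hT, hgT⟩ := h1
  filter_upwards [eventually_ge_atTop T] with U hU
  have : -g U ≤ 0 := by
    refine image_le_of_deriv_right_lt_deriv_boundary (f := fun s => -g s)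
        (f' := fun s => -g' s) (a := T) (b := U)
        (B := fun s => 0) (B' := fun _ => 0) ?_ ?_ ?_ ?_ ?_
        (right_mem_Icc.2 hU)
    · intro x hx
      exact ((hS x (hT.trans hx.1)).1.continuousAt.neg).continuousWithinAt
    · intro x hx
      exact ((hS x (hT.trans hx.1)).1.neg).hasDerivWithinAt
    · simpa using hgT
    · intro x
      exact hasDerivAt_const x 0
    · intro x hx h0
      have := (hS x (hT.trans hx.1)).2 (by linarith)
      linarith
  linarith

set_option maxHeartbeats 1000000 in
/-- `φ(s) − s → 0` as `s → ∞`, for a solution of the perturbed Riccati-type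
equation for the slope of the translator's graphical end. -/
theorem riccati_sub_linear_limit
    (s₀ C : ℝ) (hs₀ : 1 < s₀) (hC : 0 < C)
    (γ δ φ φ' : ℝ → ℝ)
    (hγ : Continuous γ) (hδ : Continuous δ)
    (hbound : ∀ s ∈ Ici s₀, |γ s| + |δ s| ≤ C / s ^ 10)
    (hφ : ∀ s ∈ Ici s₀, HasDerivWithinAt φ (φ' s) (Ici s₀) s)
    (hφ' : ContinuousOn φ' (Ici s₀))
    (heq : ∀ s ∈ Ici s₀,
      φ' s = (1 + φ s ^ 2) * (1 + γ s - (1 / s + δ s) * φ s)) :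
    Tendsto (fun s => φ s - s) atTop (nhds 0) := by
  have hd : ∀ᶠ s in atTop, HasDerivAt φ (φ' s) s := by
    filter_upwards [eventually_gt_atTop s₀] with s hs
    exact (hφ s hs.le).hasDerivAt (Ici_mem_nhds hs)
  -- normal form: `φ = s p`, `γ = a / s ^ 2`, `δ = b / s ^ 2`
  have hsm : ∀ η > 0, ∀ᶠ s in atTop, ∃ p a b : ℝ, φ s = s * p ∧ |a| ≤ η ∧ |b| ≤ η ∧
      φ' s = (1 + φ s ^ 2) * (1 + a / s ^ 2 - p - b * p / s) := by
    intro η hη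
    filter_upwards [eventually_ge_atTop s₀, eventually_ge_atTop (C / η)] with s hs hs2
    have hs1 : 1 < s := by linarith
    have hb := hbound s hs
    have hCs : C ≤ η * s := by rw [div_le_iff₀ hη] at hs2; linarith
    have h8 : s ≤ s ^ 8 := le_self_pow₀ hs1.le (by norm_num)
    have hb2 : C / s ^ 10 * s ^ 2 ≤ η := by
      have : C / s ^ 10 * s ^ 2 = C / s ^ 8 := by field_simp
      rw [this, div_le_iff₀ (by positivity)]
      nlinarith
    have hs2p : 0 < s ^ 2 := by positivity
    refine ⟨φ s / s, γ s * s ^ 2, δ s * s ^ 2, by field_simp, ?_, ?_, ?_⟩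
    · rw [abs_mul, abs_of_pos hs2p]
      nlinarith [abs_nonneg (δ s)]
    · rw [abs_mul, abs_of_pos hs2p]
      nlinarith [abs_nonneg (γ s)]
    · rw [heq s hs]
      field_simp
      ring
  -- key lower bound
  have hlow : ∀ η > 0, η ≤ 1 → ∀ᶠ s in atTop, ∀ ε, 4 * η ≤ ε → ε ≤ s → φ s ≤ s - ε →
      (1 + φ s ^ 2) * (ε / (2 * s)) ≤ φ' s := by
    intro η hη hη1
    filter_upwards [hsm η hη, eventually_ge_atTop 2] with s ⟨p, a, b, hp, ha, hb, h⟩ hs ε he hes hle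
    rw [h]
    apply mul_le_mul_of_nonneg_left _ (by positivity)
    rw [abs_le] at ha hb
    have hs0 : 0 < s := by linarith
    set r := 1 / s with hr
    have hr0 : 0 < r := by positivity
    have hsr : s * r = 1 := by rw [hr]; field_simp
    have hr2 : r ≤ 1 / 2 := by nlinarith
    have e1 : ε / (2 * s) = ε * r / 2 := by rw [hr]; field_simp
    have e2 : a / s ^ 2 = a * r * r := by rw [hr]; field_simp
    have e3 : b * p / s = b * r * p := by rw [hr]; field_simp
    rw [e1, e2, e3]
    have hp1 : p ≤ 1 - ε * r := by
      have : r * (s * p) ≤ r * (s - ε) := by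
        apply mul_le_mul_of_nonneg_left _ hr0.le
        linarith
      nlinarith
    have her : ε * r ≤ 1 := by
      have := mul_le_mul_of_nonneg_right hes hr0.le
      linarith
    have hA : - (η * r) / 2 ≤ a * r * r := by
      have h1 := mul_le_mul_of_nonneg_right ha.1 (mul_pos hr0 hr0).le
      have h2 := mul_le_mul_of_nonneg_left hr2 (mul_pos hη hr0).le
      linarith
    have hηr : 0 < η * r := by positivity
    have hbr : |b * r| ≤ η * r := by
      rw [abs_mul, abs_of_pos hr0]; exact mul_le_mul_of_nonneg_right (abs_le.2 hb) hr0.le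
    rw [abs_le] at hbr
    have h4 : 4 * (η * r) ≤ ε * r := by
      have := mul_le_mul_of_nonneg_right he hr0.le
      linarith
    have hηr2 : η * r ≤ 1 / 2 := by linarith
    rcases le_total 0 p with h0 | h0
    · have : b * r * p ≤ η * r := by
        have h1 := mul_le_mul_of_nonneg_right hbr.2 h0
        have h2 : p ≤ 1 := by linarith [mul_pos hη hr0]
        have h3 := mul_le_mul_of_nonneg_left h2 hηr.le
        linarith
      linarith
    · have : b * r * p ≤ -p / 2 := by
        have h1 : -(1 / 2) ≤ b * r := by linarith
        have h2 := mul_le_mul_of_nonpos_right h1 h0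
        linarith
      linarith
  have hupp : ∀ ε > 0, ε ≤ 1 → ∀ᶠ s in atTop, s + ε ≤ φ s →
      φ' s ≤ (1 + φ s ^ 2) * (-(ε / (2 * s))) := by
    intro ε hε hε1
    filter_upwards [hsm (ε / 8) (by positivity), eventually_ge_atTop 2] with s ⟨p, a, b, hp, ha, hb, h⟩ hs hle
    rw [h]
    apply mul_le_mul_of_nonneg_left _ (by positivity)
    rw [abs_le] at ha hb
    have hs0 : 0 < s := by linarith
    set r := 1 / s with hr
    have hr0 : 0 < r := by positivity
    have hsr : s * r = 1 := by rw [hr]; field_simp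
    have hr2 : r ≤ 1 / 2 := by nlinarith
    have e1 : ε / (2 * s) = ε * r / 2 := by rw [hr]; field_simp
    have e2 : a / s ^ 2 = a * r * r := by rw [hr]; field_simp
    have e3 : b * p / s = b * r * p := by rw [hr]; field_simp
    rw [e1, e2, e3]
    have hp1 : 1 + ε * r ≤ p := by
      have : r * (s + ε) ≤ r * (s * p) := by
        apply mul_le_mul_of_nonneg_left _ hr0.le
        linarith
      nlinarith
    have hεr : 0 < ε * r := by positivity
    have hεr2 : ε * r ≤ 1 / 2 := by nlinarith
    have hA : a * r * r ≤ ε * r / 16 := by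
      have h1 := mul_le_mul_of_nonneg_right ha.2 (mul_pos hr0 hr0).le
      have h2 := mul_le_mul_of_nonneg_left hr2 (mul_pos hε hr0).le
      linarith
    have hbr : |b * r| ≤ ε / 8 * r := by
      rw [abs_mul, abs_of_pos hr0]; exact mul_le_mul_of_nonneg_right (abs_le.2 hb) hr0.le
    rw [abs_le] at hbr
    have h5 : -(b * r * p) ≤ ε / 8 * r * p := by
      have := mul_le_mul_of_nonneg_right hbr.1 (show 0 ≤ p by linarith)
      linarith
    have h6 : (1 - ε / 8 * r) * (1 + ε * r) ≤ (1 - ε / 8 * r) * p :=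
      mul_le_mul_of_nonneg_left hp1 (by linarith)
    nlinarith
  -- step 1
  have s1 : ∀ᶠ s in atTop, 0 ≤ φ s - 3 := by
    apply barrier_aux _ φ' (1/4) (by norm_num)
    · filter_upwards [hd] with s h using h.sub_const 3
    · filter_upwards [hlow (1/4) (by norm_num) (by norm_num), eventually_ge_atTop 6] with s h hs hle
      have := h (s / 2) (by linarith) (by linarith) (by linarith)
      have e : s / 2 / (2 * s) = 1 / 4 := by field_simp; norm_num
      rw [e] at this
      nlinarith [sq_nonneg (φ s)]
  have s2 : ∀ᶠ s in atTop, 0 ≤ φ s - s / 2 := by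
    apply barrier_aux _ (fun s => φ' s - 1 / 2) (1/4) (by norm_num)
    · filter_upwards [hd] with s h using h.sub ((hasDerivAt_id s).div_const 2)
    · filter_upwards [hlow (1/4) (by norm_num) (by norm_num), eventually_ge_atTop 6, s1] with s h hs h3 hle
      have := h (s / 2) (by linarith) (by linarith) (by linarith)
      have e : s / 2 / (2 * s) = 1 / 4 := by field_simp; norm_num
      rw [e] at this
      nlinarith
  have s3 : ∀ ε > 0, ε ≤ 1 → ∀ᶠ s in atTop, 0 ≤ φ s - (s - ε) := by
    intro ε hε hε1
    apply barrier_aux _ (fun s => φ' s - 1) 1 (by norm_num)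
    · filter_upwards [hd] with s h using h.sub ((hasDerivAt_id s).sub_const ε)
    · filter_upwards [hlow (ε/4) (by linarith) (by linarith), eventually_ge_atTop 6, s2,
        eventually_ge_atTop (16 / ε)] with s h hs h3 h4 hle
      have := h ε (by linarith) (by linarith) (by linarith)
      rw [div_le_iff₀ hε] at h4
      have h5 : s ^ 2 / 4 * (ε / (2 * s)) ≤ (1 + φ s ^ 2) * (ε / (2 * s)) := by
        apply mul_le_mul_of_nonneg_right _ (by positivity)
        nlinarith
      have e : s ^ 2 / 4 * (ε / (2 * s)) = s * ε / 8 := by field_simp; norm_num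
      linarith
  have s4 : ∀ ε > 0, ε ≤ 1 → ∀ᶠ s in atTop, 0 ≤ (s + ε) - φ s := by
    intro ε hε hε1
    apply barrier_aux _ (fun s => 1 - φ' s) 1 (by norm_num)
    · filter_upwards [hd] with s h using ((hasDerivAt_id s).add_const ε).sub h
    · filter_upwards [hupp ε hε hε1, eventually_ge_atTop 6] with s h hs hle
      have := h (by linarith)
      have : 0 ≤ (1 + φ s ^ 2) * (ε / (2 * s)) := by positivity
      linarith
  rw [Metric.tendsto_nhds]
  intro ε hε
  have hm : 0 < min (ε / 2) 1 := by positivity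
  filter_upwards [s3 _ hm (min_le_right _ _), s4 _ hm (min_le_right _ _)] with s h1 h2
  have := min_le_left (ε / 2) 1
  rw [Real.dist_eq, abs_lt]
  constructor <;> linarith
end

section
/- s·(φ(s) − s) → −1 as s → ∞. -/
open Set Filter

lemma aux_barrier (S c : ℝ) (hc : 0 < c) (f f' : ℝ → ℝ)
    (hf : ∀ s ∈ Ici S, HasDerivWithinAt f (f' s) (Ici S) s)
    (h : ∀ s ∈ Ici S, 0 ≤ f s → f' s ≤ -c) :
    ∃ T, S ≤ T ∧ ∀ s ∈ Ici T, f s ≤ 0 := by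
  have key : ∀ a b : ℝ, S ≤ a → a ≤ b → ∀ (B B' : ℝ → ℝ), (∀ x, HasDerivAt B (B' x) x) →
      f a ≤ B a → (∀ x ∈ Ico a b, 0 ≤ B x ∧ -c < B' x) → f b ≤ B b := by
    intro a b ha hab B B' hB hfa hx
    refine image_le_of_deriv_right_lt_deriv_boundary (f := f) (f' := f') (a := a) (b := b)
      ?_ ?_ hfa hB ?_ (right_mem_Icc.2 hab)
    · intro x hx
      exact (hf x (ha.trans hx.1)).continuousWithinAt.mono (fun y hy => ha.trans hy.1)
    · intro x hx
      exact (hf x (ha.trans hx.1)).mono (fun y hy => (ha.trans hx.1).trans hy)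
    · intro x hxx he
      have := hx x hxx
      exact lt_of_le_of_lt (h x (ha.trans hxx.1) (he ▸ this.1)) this.2
  set M := max (f S) 0 with hM
  have hM0 : 0 ≤ M := le_max_right _ _
  have hT : S ≤ S + 2 * M / c := by
    have : 0 ≤ 2 * M / c := by positivity
    linarith
  refine ⟨S + 2 * M / c, hT, fun s hs => ?_⟩
  have h1 : f (S + 2 * M / c) ≤ 0 := by
    have := key S (S + 2 * M / c) le_rfl hT (fun x => M - c / 2 * (x - S)) (fun _ => -(c / 2)) ?_ ?_ ?_
    · have e : M - c / 2 * (S + 2 * M / c - S) = 0 := by field_simp; ring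
      exact this.trans_eq e
    · intro x
      have := (((hasDerivAt_id x).sub_const S).const_mul (c / 2)).const_sub M
      simpa using this
    · have : f S ≤ M := le_max_left (f S) 0
      simpa using this
    · intro x hx
      refine ⟨?_, by linarith⟩
      have h2 : x - S ≤ 2 * M / c := by linarith [hx.2]
      have h3 : c / 2 * (x - S) ≤ c / 2 * (2 * M / c) := by gcongr
      have e : c / 2 * (2 * M / c) = M := by field_simp
      linarith
  exact key _ s hT hs (fun _ => 0) (fun _ => 0) (fun x => hasDerivAt_const x 0) h1
    (fun x _ => ⟨le_rfl, by linarith⟩)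

/-- with `t = 1/s`. -/
lemma aux_gd (ε s t g d : ℝ) (hε : 0 < ε) (hε1 : ε < 1) (hs : 100 ≤ ε * s) (hst : s * t = 1)
    (hb : |g| + |d| ≤ ε / 100 * t ^ 3) :
    100 < s ∧ 0 < t ∧ 100 * t ≤ ε ∧ |g| ≤ ε / 100 * t ^ 2 ∧ |d| * s ≤ ε / 100 * t ^ 2 ∧
      |d| ≤ t / 2 := by
  have hs0 : 0 < s := by
    by_contra hh
    nlinarith
  have hs1 : 100 < s := by nlinarith
  have ht : 0 < t := by
    by_contra hh
    nlinarith
  have ht1 : 100 * t ≤ ε := by nlinarith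
  have ht3 : t ^ 3 ≤ t ^ 2 := by
    have : 0 ≤ t ^ 2 := by positivity
    nlinarith
  have hg := abs_nonneg g
  have hd := abs_nonneg d
  refine ⟨hs1, ht, ht1, ?_, ?_, ?_⟩
  · nlinarith
  · have : |d| ≤ ε / 100 * t ^ 3 := by linarith
    calc |d| * s ≤ ε / 100 * t ^ 3 * s := by gcongr
      _ = ε / 100 * t ^ 2 * (s * t) := by ring
      _ = _ := by rw [hst]; ring
  · have h2 : t ^ 2 ≤ t := by nlinarith
    have h3 : t ^ 3 ≤ t := by linarith
    nlinarith

lemma aux_upper (ε s t g d p : ℝ) (hε : 0 < ε) (hε1 : ε < 1) (hs : 100 ≤ ε * s)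
    (hst : s * t = 1) (hb : |g| + |d| ≤ ε / 100 * t ^ 3) (hp : s - (1 - ε) * t ≤ p) :
    (1 + p ^ 2) * (1 + g - (t + d) * p) ≤ 1 - ε / 4 := by
  obtain ⟨hs1, ht, ht1, hg, hd, hd2⟩ := aux_gd ε s t g d hε hε1 hs hst hb
  obtain ⟨F, rfl⟩ : ∃ F, p = s - (1 - ε) * t + F := ⟨p - (s - (1 - ε) * t), by ring⟩
  have hF : 0 ≤ F := by linarith
  have hdl := (abs_le.1 hd2).1
  have hU0 : 0 ≤ s - (1 - ε) * t := by nlinarith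
  have hU1 : s - (1 - ε) * t ≤ s := by nlinarith
  have hdU : -d * (s - (1 - ε) * t) ≤ ε / 100 * t ^ 2 := by
    calc -d * (s - (1 - ε) * t) ≤ |d| * (s - (1 - ε) * t) := by
          gcongr; exact neg_le_abs d
      _ ≤ |d| * s := by gcongr
      _ ≤ _ := hd
  have hfac : 1 + g - (t + d) * (s - (1 - ε) * t + F) ≤ (1 - ε / 2) * t ^ 2 - t / 2 * F := by
    have e : 1 + g - (t + d) * (s - (1 - ε) * t + F)
      = (1 - s * t) + g + -d * (s - (1 - ε) * t) + (1 - ε) * t ^ 2 - (t + d) * F := by ring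
    rw [e, hst]
    have h1 := (abs_le.1 hg).2
    have h2 : t / 2 * F ≤ (t + d) * F := by gcongr; linarith
    have h3 : 0 ≤ ε * t ^ 2 := by positivity
    linarith
  rcases le_total (2 * t) F with h | h
  · have : 1 + g - (t + d) * (s - (1 - ε) * t + F) ≤ 0 := by
      have : t / 2 * (2 * t) ≤ t / 2 * F := by gcongr
      nlinarith [sq_nonneg t]
    have h5 : (1 + (s - (1 - ε) * t + F) ^ 2) * (1 + g - (t + d) * (s - (1 - ε) * t + F)) ≤ 0 :=
      mul_nonpos_of_nonneg_of_nonpos (by positivity) this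
    linarith
  · have hsq : (s - (1 - ε) * t + F) ^ 2 ≤ (s + 2 * t) ^ 2 := by
      gcongr
    have hsq2 : 1 + (s - (1 - ε) * t + F) ^ 2 ≤ s ^ 2 + 6 := by
      have : (s + 2 * t) ^ 2 = s ^ 2 + 4 * (s * t) + 4 * t ^ 2 := by ring
      rw [hst] at this
      nlinarith
    have h0 : 0 ≤ (1 - ε / 2) * t ^ 2 := mul_nonneg (by linarith) (by positivity)
    calc _ ≤ (1 + (s - (1 - ε) * t + F) ^ 2) * ((1 - ε / 2) * t ^ 2) := by
          gcongr
          have : 0 ≤ t / 2 * F := by positivity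
          linarith
      _ ≤ (s ^ 2 + 6) * ((1 - ε / 2) * t ^ 2) := by gcongr
      _ = (1 - ε / 2) * (s * t) ^ 2 + 6 * (1 - ε / 2) * t ^ 2 := by ring
      _ ≤ 1 - ε / 4 := by rw [hst]; nlinarith [mul_pos hε (pow_pos ht 2)]

lemma aux_lower (ε s t g d p : ℝ) (hε : 0 < ε) (hε1 : ε < 1) (hs : 100 ≤ ε * s)
    (hst : s * t = 1) (hb : |g| + |d| ≤ ε / 100 * t ^ 3) (hp3 : 3 ≤ p)
    (hp : p ≤ s - (1 + ε) * t) :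
    1 + ε / 4 ≤ (1 + p ^ 2) * (1 + g - (t + d) * p) := by
  obtain ⟨hs1, ht, ht1, hg, hd, hd2⟩ := aux_gd ε s t g d hε hε1 hs hst hb
  obtain ⟨G, hG⟩ : ∃ G, G = (s - (1 + ε) * t) - p := ⟨_, rfl⟩
  have hF : 0 ≤ G := by linarith
  have hdl := (abs_le.1 hd2).1
  have hU0 : 0 ≤ s - (1 + ε) * t := by linarith
  have hU1 : s - (1 + ε) * t ≤ s := by nlinarith
  have hdU : d * (s - (1 + ε) * t) ≤ ε / 100 * t ^ 2 := by
    calc d * (s - (1 + ε) * t) ≤ |d| * (s - (1 + ε) * t) := by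
          gcongr; exact le_abs_self d
      _ ≤ |d| * s := by gcongr
      _ ≤ _ := hd
  have hfac : (1 + ε / 2) * t ^ 2 + t / 2 * G ≤ 1 + g - (t + d) * p := by
    have e : 1 + g - (t + d) * p
      = (1 - s * t) + g - d * (s - (1 + ε) * t) + (1 + ε) * t ^ 2 + (t + d) * G := by
        rw [hG]; ring
    rw [e, hst]
    have h1 := (abs_le.1 hg).1
    have h2 : t / 2 * G ≤ (t + d) * G := by gcongr; linarith
    have h3 : 0 ≤ ε * t ^ 2 := by positivity
    linarith
  have ht2 : 0 < (1 + ε / 2) * t ^ 2 := by positivity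
  have hA : ∀ a b : ℝ, 0 ≤ a → 0 ≤ b → a ≤ 1 + p ^ 2 → b ≤ 1 + g - (t + d) * p →
      a * b ≤ (1 + p ^ 2) * (1 + g - (t + d) * p) := fun a b ha hb h1 h2 =>
    mul_le_mul h1 h2 hb (by positivity)
  rcases le_total p (s / 2) with h | h
  · have hG4 : 0.4 * s ≤ G := by nlinarith
    have h6 : t / 2 * (0.4 * s) ≤ t / 2 * G := by gcongr
    have h7 : t / 2 * (0.4 * s) = 0.2 * (s * t) := by ring
    rw [hst] at h7
    have := hA 10 0.2 (by norm_num) (by norm_num) (by nlinarith) (by linarith)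
    linarith
  · rcases le_total (10 * t) G with h' | h'
    · have h6 : t / 2 * (10 * t) ≤ t / 2 * G := by gcongr
      have := hA (s ^ 2 / 4) (5 * t ^ 2) (by positivity) (by positivity) (by nlinarith)
        (by linarith)
      have e : s ^ 2 / 4 * (5 * t ^ 2) = 5 / 4 * (s * t) ^ 2 := by ring
      rw [hst] at e
      linarith
    · have hpl : s - 12 * t ≤ p := by nlinarith
      have hsq : (s - 12 * t) ^ 2 ≤ p ^ 2 := by
        have : 0 ≤ s - 12 * t := by linarith
        gcongr
      have e1 : (s - 12 * t) ^ 2 = s ^ 2 - 24 * (s * t) + 144 * t ^ 2 := by ring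
      rw [hst] at e1
      have h9 : 0 ≤ t / 2 * G := by positivity
      have := hA (s ^ 2 - 24) ((1 + ε / 2) * t ^ 2) (by nlinarith) ht2.le (by nlinarith)
        (by linarith)
      have e : (s ^ 2 - 24) * ((1 + ε / 2) * t ^ 2)
        = (1 + ε / 2) * (s * t) ^ 2 - 24 * (1 + ε / 2) * t ^ 2 := by ring
      rw [hst] at e
      have h10 : t ^ 2 ≤ ε / 100 * (1 / 100) := by
        rw [pow_two]
        apply mul_le_mul <;> linarith
      have h11 : (1 + ε / 2) * t ^ 2 ≤ 2 * t ^ 2 := by gcongr; linarith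
      linarith

lemma aux_three (ε s t g d p : ℝ) (hε : 0 < ε) (hε1 : ε < 1) (hs : 100 ≤ ε * s)
    (hst : s * t = 1) (hb : |g| + |d| ≤ ε / 100 * t ^ 3) (hp3 : p ≤ 3) :
    1 / 2 ≤ (1 + p ^ 2) * (1 + g - (t + d) * p) := by
  obtain ⟨hs1, ht, ht1, hg, hd, hd2⟩ := aux_gd ε s t g d hε hε1 hs hst hb
  have hdl := (abs_le.1 hd2)
  have h1 := (abs_le.1 hg).1
  have h2 : (t + d) * p ≤ (t + d) * 3 := by
    have : 0 ≤ t + d := by linarith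
    gcongr
  have h3 : ε / 100 * t ^ 2 ≤ 0.01 := by nlinarith
  have : 1 / 2 ≤ 1 + g - (t + d) * p := by linarith
  nlinarith [sq_nonneg p]

lemma aux_ev (s₀ C : ℝ) (hs₀ : 1 < s₀) (hC : 0 < C)
    (γ δ φ φ' : ℝ → ℝ)
    (hbound : ∀ s ∈ Ici s₀, |γ s| + |δ s| ≤ C / s ^ 10)
    (hφ : ∀ s ∈ Ici s₀, HasDerivWithinAt φ (φ' s) (Ici s₀) s)
    (heq : ∀ s ∈ Ici s₀,
      φ' s = (1 + φ s ^ 2) * (1 + γ s - (1 / s + δ s) * φ s))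
    (ε : ℝ) (hε : 0 < ε) (hε1 : ε < 1) :
    ∃ T, 1 < T ∧ ∀ s ∈ Ici T, s - (1 + ε) * s⁻¹ ≤ φ s ∧ φ s ≤ s - (1 - ε) * s⁻¹ := by
  obtain ⟨S, hS0, hS1, hS2⟩ : ∃ S, s₀ ≤ S ∧ 100 / ε ≤ S ∧ 100 * C / ε ≤ S :=
    ⟨max s₀ (max (100 / ε) (100 * C / ε)), by simp, by simp, by simp⟩
  have hh : ∀ s ∈ Ici S, 100 ≤ ε * s ∧ s * s⁻¹ = 1 ∧
      |γ s| + |δ s| ≤ ε / 100 * s⁻¹ ^ 3 ∧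
      φ' s = (1 + φ s ^ 2) * (1 + γ s - (s⁻¹ + δ s) * φ s) := by
    intro s hs
    have hsS : S ≤ s := hs
    have hs1 : 1 < s := by linarith
    have hs0 : 0 < s := by linarith
    refine ⟨?_, mul_inv_cancel₀ hs0.ne', ?_, ?_⟩
    · have := (div_le_iff₀ hε).1 (hS1.trans hsS)
      linarith
    · refine (hbound s (hS0.trans hsS)).trans ?_
      have := (div_le_iff₀ hε).1 (hS2.trans hsS)
      have h7 : s ≤ s ^ 7 := le_self_pow₀ hs1.le (by norm_num)
      have h8 : C ≤ ε / 100 * s ^ 7 := by nlinarith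
      rw [div_le_iff₀ (by positivity)]
      have e : ε / 100 * s⁻¹ ^ 3 * s ^ 10 = ε / 100 * s ^ 7 := by field_simp
      rw [e]; exact h8
    · rw [heq s (hS0.trans hsS), one_div]
  have hder : ∀ T, S ≤ T → ∀ s ∈ Ici T, HasDerivWithinAt φ (φ' s) (Ici T) s :=
    fun T hT s hs => (hφ s ((hS0.trans hT).trans hs)).mono (Ici_subset_Ici.2 (hS0.trans hT))
  have hbar : ∀ T, S ≤ T → ∀ k, ∀ s ∈ Ici T,
      HasDerivWithinAt (fun s => s - k * s⁻¹) (1 + k * s⁻¹ ^ 2) (Ici T) s := by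
    intro T hT k s hs
    have hs' : T ≤ s := hs
    have hs0 : s ≠ 0 := by linarith
    have := ((hasDerivAt_id s).sub ((hasDerivAt_inv hs0).const_mul k)).hasDerivWithinAt (s := Ici T)
    have e : 1 + k * s⁻¹ ^ 2 = 1 - k * -(s ^ 2)⁻¹ := by rw [inv_pow]; ring
    rw [e]
    exact this
  obtain ⟨T1, hT1, h1⟩ := aux_barrier S (1 / 2) (by norm_num) (fun s => 3 - φ s)
    (fun s => - φ' s) (fun s hs => (hder S le_rfl s hs).const_sub 3) (by
      intro s hs h
      obtain ⟨a, b, c, e⟩ := hh s hs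
      have := aux_three ε s s⁻¹ (γ s) (δ s) (φ s) hε hε1 a b c (by linarith)
      linarith)
  obtain ⟨T2, hT2, h2⟩ := aux_barrier T1 (ε / 8) (by linarith)
    (fun s => (s - (1 + ε) * s⁻¹) - φ s)
    (fun s => (1 + (1 + ε) * s⁻¹ ^ 2) - φ' s)
    (fun s hs => (hbar T1 hT1 _ s hs).sub (hder T1 hT1 s hs)) (by
      intro s hs h
      obtain ⟨a, b, c, e⟩ := hh s (hT1.trans hs)
      have h3 := h1 s hs
      have := aux_lower ε s s⁻¹ (γ s) (δ s) (φ s) hε hε1 a b c (by linarith) (by linarith)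
      obtain ⟨-, ht, ht1, -⟩ := aux_gd ε s s⁻¹ (γ s) (δ s) hε hε1 a b c
      have h4 : (1 + ε) * s⁻¹ ^ 2 ≤ 2 * s⁻¹ ^ 2 := by gcongr; linarith
      have h5 : s⁻¹ ^ 2 ≤ ε / 100 := by nlinarith
      linarith)
  obtain ⟨T3, hT3, h3⟩ := aux_barrier S (ε / 4) (by linarith)
    (fun s => φ s - (s - (1 - ε) * s⁻¹))
    (fun s => φ' s - (1 + (1 - ε) * s⁻¹ ^ 2))
    (fun s hs => (hder S le_rfl s hs).sub (hbar S le_rfl _ s hs)) (by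
      intro s hs h
      obtain ⟨a, b, c, e⟩ := hh s hs
      have := aux_upper ε s s⁻¹ (γ s) (δ s) (φ s) hε hε1 a b c (by linarith)
      have h4 : 0 ≤ (1 - ε) * s⁻¹ ^ 2 := mul_nonneg (by linarith) (by positivity)
      linarith)
  refine ⟨max T2 T3, lt_of_lt_of_le (by linarith) (le_max_right _ _), fun s hs => ?_⟩
  have := h2 s (le_trans (le_max_left T2 T3) hs : T2 ≤ s)
  have := h3 s (le_trans (le_max_right T2 T3) hs : T3 ≤ s)
  constructor <;> linarith



/-- `s(φ(s) − s) → −1` as `s → ∞`, for a solution of the perturbed Riccati-type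
equation for the slope of the translator's graphical end. -/
theorem riccati_first_order_asymptotics
    (s₀ C : ℝ) (hs₀ : 1 < s₀) (hC : 0 < C)
    (γ δ φ φ' : ℝ → ℝ)
    (hγ : Continuous γ) (hδ : Continuous δ)
    (hbound : ∀ s ∈ Ici s₀, |γ s| + |δ s| ≤ C / s ^ 10)
    (hφ : ∀ s ∈ Ici s₀, HasDerivWithinAt φ (φ' s) (Ici s₀) s)
    (hφ' : ContinuousOn φ' (Ici s₀))
    (heq : ∀ s ∈ Ici s₀,
      φ' s = (1 + φ s ^ 2) * (1 + γ s - (1 / s + δ s) * φ s)) :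
    Tendsto (fun s => s * (φ s - s)) atTop (nhds (-1)) := by
  rw [Metric.tendsto_atTop]
  intro r hr
  obtain ⟨ε, hε, hε1, hεr⟩ : ∃ ε : ℝ, 0 < ε ∧ ε < 1 ∧ ε < r :=
    ⟨min 1 r / 2, by positivity, by linarith [min_le_left 1 r],
      by have : 0 < min 1 r := by positivity
         linarith [min_le_right 1 r]⟩
  obtain ⟨T, hT1, hT⟩ := aux_ev s₀ C hs₀ hC γ δ φ φ' hbound hφ heq ε hε hε1
  refine ⟨T, fun s hs => ?_⟩
  obtain ⟨h1, h2⟩ := hT s hs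
  have hs0 : 0 < s := by linarith
  have e : s * s⁻¹ = 1 := mul_inv_cancel₀ hs0.ne'
  have h3 := mul_le_mul_of_nonneg_left h1 hs0.le
  have h4 := mul_le_mul_of_nonneg_left h2 hs0.le
  have e3 : s * (s - (1 + ε) * s⁻¹) = s * s - (1 + ε) * (s * s⁻¹) := by ring
  have e4 : s * (s - (1 - ε) * s⁻¹) = s * s - (1 - ε) * (s * s⁻¹) := by ring
  rw [e3, e] at h3
  rw [e4, e] at h4
  rw [Real.dist_eq, abs_lt]
  constructor <;> nlinarith
end

section
/- s²·(s·(φ(s) − s) + 1) → −2 as s → ∞; in particular φ(s) = s − 1/s − 2/s³ + o(1/s³) as s → ∞. -/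
open Set Filter Asymptotics

lemma ric_poly (t a : ℝ) (ht0 : 0 < t) (ht1 : t ≤ 1) (ha1 : 1 ≤ a) (ha3 : a ≤ 3) :
    -100 ≤ (1 - 6 * a) + (a * (1 - 2 * a) + 2 * a) * t ^ 2 + (2 * a ^ 2 + a ^ 2) * t ^ 4
            + a ^ 3 * t ^ 6 ∧
    (1 - 6 * a) + (a * (1 - 2 * a) + 2 * a) * t ^ 2 + (2 * a ^ 2 + a ^ 2) * t ^ 4
            + a ^ 3 * t ^ 6 ≤ 100 := by
  have a0 : 0 ≤ a := by linarith
  have q : ∀ m n : ℕ, a ^ m * t ^ n ≤ 3 ^ m := fun m n => by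
    have h1 : a ^ m ≤ 3 ^ m := pow_le_pow_left₀ a0 ha3 m
    have h2 : t ^ n ≤ 1 := pow_le_one₀ ht0.le ht1
    have h3 := mul_le_mul h1 h2 (by positivity) (by positivity)
    simpa using h3
  have q0 : ∀ m n : ℕ, 0 ≤ a ^ m * t ^ n := fun m n => by positivity
  have := q 1 2
  have := q 2 2
  have := q 2 4
  have := q 3 6
  have := q0 1 2
  have := q0 2 2
  have := q0 2 4
  have := q0 3 6
  constructor <;> linarith

lemma ric_key (s t a g d V : ℝ) (hs : 36 ≤ s) (hst : s * t = 1) (ha1 : 1 ≤ a) (ha3 : a ≤ 3)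
    (hg : |g| ≤ t ^ 9) (hd : |d| ≤ t ^ 9) (hV : V = s - t - a * t ^ 3) :
    |(1 + V ^ 2) * (1 + g - (t + d) * V) - (1 + t ^ 2 + 3 * a * t ^ 4) - (a - 2) * t ^ 2|
        ≤ 200 * t ^ 4 ∧
      |1 + g - (t + d) * V| ≤ 2 * t ^ 2 ∧ s / 2 ≤ V ∧ V ≤ s ∧ t / 2 ≤ t + d := by
  have ht0 : 0 < t := by
    by_contra h
    push Not at h
    nlinarith
  have ht1 : t ≤ 1 / 36 := by
    by_contra h
    push Not at h
    nlinarith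
  have hp : ∀ n : ℕ, t ^ (n + 1) ≤ t ^ n / 36 := by
    intro n
    have := pow_pos ht0 n
    rw [pow_succ]; nlinarith
  have hpp : ∀ n : ℕ, 0 < t ^ n := fun n => pow_pos ht0 n
  have h1 := hp 1
  have h2 := hp 2
  have h3 := hp 3
  have h4 := hp 4
  have h5 := hp 5
  have h6 := hp 6
  have h7 := hp 7
  have h8 := hp 8
  have h9 := hp 9
  norm_num at h1 h2 h3 h4 h5 h6 h7 h8 h9
  have hV1 : V ≤ s := by
    have := hpp 3
    nlinarith
  have hV2 : s / 2 ≤ V := by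
    have := hpp 3
    nlinarith
  have hV0 : 0 < V := by linarith
  have hr : |g - d * V| ≤ 2 * t ^ 8 := by
    have e1 : |g - d * V| ≤ |g| + |d * V| := abs_sub _ _
    have e2 : |d * V| ≤ t ^ 9 * s := by
      rw [abs_mul, abs_of_pos hV0]
      exact mul_le_mul hd hV1 hV0.le (hpp 9).le
    have e3 : t ^ 9 * s = t ^ 8 := by linear_combination t ^ 8 * hst
    have := hpp 8
    linarith
  have hP : 1 + g - (t + d) * V = t ^ 2 + a * t ^ 4 + (g - d * V) := by
    rw [hV]; linear_combination -hst
  obtain ⟨r, hrr⟩ : ∃ r, r = g - d * V := ⟨_, rfl⟩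
  rw [← hrr] at hP hr
  rw [hP]
  have hr' := abs_le.1 hr
  have p2 := hpp 2
  have p4 := hpp 4
  have p6 := hpp 6
  have p8 := hpp 8
  refine ⟨?_, ?_, hV2, hV1, ?_⟩
  · have hmain : (1 + V ^ 2) * (t ^ 2 + a * t ^ 4 + r) - (1 + t ^ 2 + 3 * a * t ^ 4) - (a - 2) * t ^ 2
        = t ^ 4 * ((1 - 6 * a) + (a * (1 - 2 * a) + 2 * a) * t ^ 2 + (2 * a ^ 2 + a ^ 2) * t ^ 4
            + a ^ 3 * t ^ 6) + (1 + V ^ 2) * r := by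
      have hVt : V * t = 1 - t ^ 2 - a * t ^ 4 := by rw [hV]; linear_combination hst
      have : V ^ 2 * t ^ 2 = (1 - t ^ 2 - a * t ^ 4) ^ 2 := by rw [← hVt]; ring
      linear_combination (1 + a * t ^ 2) * this
    rw [hmain]
    have b1 : |(1 + V ^ 2) * r| ≤ 4 * t ^ 6 := by
      rw [abs_mul, abs_of_pos (by positivity)]
      have : 1 + V ^ 2 ≤ 2 * s ^ 2 := by nlinarith
      calc (1 + V ^ 2) * |r| ≤ (2 * s ^ 2) * (2 * t ^ 8) :=
            mul_le_mul this hr (abs_nonneg _) (by positivity)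
        _ = 4 * t ^ 6 * (s * t) ^ 2 := by ring
        _ = 4 * t ^ 6 := by rw [hst]; ring
    have b1' := abs_le.1 b1
    obtain ⟨u2, u1⟩ := ric_poly t a ht0 (by linarith) ha1 ha3
    have v1 := mul_le_mul_of_nonneg_left u1 p4.le
    have v2 := mul_le_mul_of_nonneg_left u2 p4.le
    rw [abs_le]
    constructor <;> linarith
  · rw [abs_le]
    have : a * t ^ 4 ≤ 3 * t ^ 4 := by nlinarith
    have : 0 ≤ a * t ^ 4 := by positivity
    constructor <;> linarith
  · have := (abs_le.1 hd).1
    have := hpp 9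
    linarith

lemma ric_upper (s t a g d V w : ℝ) (hs : 36 ≤ s) (hst : s * t = 1) (ha1 : 1 ≤ a) (ha3 : a ≤ 3)
    (hg : |g| ≤ t ^ 9) (hd : |d| ≤ t ^ 9) (hV : V = s - t - a * t ^ 3) (hw : 0 ≤ w)
    (hsm : 200 * t ^ 4 < (2 - a) * t ^ 2) :
    (1 + (V + w) ^ 2) * (1 + g - (t + d) * (V + w)) < (1 + t ^ 2 + 3 * a * t ^ 4) - w := by
  obtain ⟨k1, k2, k3, k4, k5⟩ := ric_key s t a g d V hs hst ha1 ha3 hg hd hV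
  obtain ⟨P, hP⟩ : ∃ P, P = 1 + g - (t + d) * V := ⟨_, rfl⟩
  have e : (1 + (V + w) ^ 2) * (1 + g - (t + d) * (V + w))
      = (1 + V ^ 2) * P + w * ((2 * V + w) * P - (1 + (V + w) ^ 2) * (t + d)) := by
    rw [hP]; ring
  rw [← hP] at k1 k2
  rw [e]
  have k1 := (abs_le.1 k1).2
  have k2 := (abs_le.1 k2).2
  have ht0 : 0 < t := by
    by_contra h
    push Not at h
    nlinarith
  have f1 : (2 * V + w) * P ≤ 4 * (V + w) * t ^ 2 := by
    calc (2 * V + w) * P ≤ (2 * V + w) * (2 * t ^ 2) :=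
          mul_le_mul_of_nonneg_left k2 (by linarith)
      _ ≤ 4 * (V + w) * t ^ 2 := by nlinarith [mul_nonneg hw (sq_nonneg t)]
  have f2 : (1 + (V + w) ^ 2) * (t / 2) ≤ (1 + (V + w) ^ 2) * (t + d) :=
    mul_le_mul_of_nonneg_left k5 (by positivity)
  have hy : s / 2 ≤ V + w := by linarith
  have f3 : (V + w) / 4 ≤ (1 + (V + w) ^ 2) * (t / 2) := by
    have : (V + w) * s / 2 ≤ (V + w) ^ 2 := by nlinarith
    have : ((V + w) * s / 2) * (t / 2) ≤ (1 + (V + w) ^ 2) * (t / 2) :=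
      mul_le_mul_of_nonneg_right (by linarith) (by positivity)
    have e2 : ((V + w) * s / 2) * (t / 2) = (V + w) / 4 := by linear_combination (V + w) / 4 * hst
    linarith
  have ht1 : t ≤ 1 / 36 := by
    by_contra h
    push Not at h
    nlinarith
  have t2 : t ^ 2 ≤ 1 / 1000 := by nlinarith
  have f4 : 4 * (V + w) * t ^ 2 ≤ 4 * (V + w) * (1 / 1000) :=
    mul_le_mul_of_nonneg_left t2 (by linarith)
  have f5 : (2 * V + w) * P - (1 + (V + w) ^ 2) * (t + d) ≤ -1 := by linarith
  have := mul_le_mul_of_nonneg_left f5 hw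
  linarith

lemma ric_lower (s t a g d V w : ℝ) (hs : 36 ≤ s) (hst : s * t = 1) (ha1 : 1 ≤ a) (ha3 : a ≤ 3)
    (hg : |g| ≤ t ^ 9) (hd : |d| ≤ t ^ 9) (hV : V = s - t - a * t ^ 3) (hw : 0 ≤ w)
    (hy : s / 3 ≤ V - w)
    (hsm : 200 * t ^ 4 < (a - 2) * t ^ 2) :
    (1 + t ^ 2 + 3 * a * t ^ 4) + w < (1 + (V - w) ^ 2) * (1 + g - (t + d) * (V - w)) := by
  obtain ⟨k1, k2, k3, k4, k5⟩ := ric_key s t a g d V hs hst ha1 ha3 hg hd hV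
  obtain ⟨P, hP⟩ : ∃ P, P = 1 + g - (t + d) * V := ⟨_, rfl⟩
  have e : (1 + (V - w) ^ 2) * (1 + g - (t + d) * (V - w))
      = (1 + V ^ 2) * P + w * ((1 + (V - w) ^ 2) * (t + d) - (2 * V - w) * P) := by
    rw [hP]; ring
  rw [← hP] at k1 k2
  rw [e]
  have k1 := (abs_le.1 k1).1
  have k2 := (abs_le.1 k2).2
  have ht0 : 0 < t := by
    by_contra h
    push Not at h
    nlinarith
  have f1 : (2 * V - w) * P ≤ 4 * t := by
    calc (2 * V - w) * P ≤ (2 * V - w) * (2 * t ^ 2) :=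
          mul_le_mul_of_nonneg_left k2 (by linarith)
      _ ≤ (2 * s) * (2 * t ^ 2) := mul_le_mul_of_nonneg_right (by linarith) (by positivity)
      _ = 4 * t := by linear_combination 4 * t * hst
  have f2 : (1 + (V - w) ^ 2) * (t / 2) ≤ (1 + (V - w) ^ 2) * (t + d) :=
    mul_le_mul_of_nonneg_left k5 (by positivity)
  have f3 : s / 18 ≤ (1 + (V - w) ^ 2) * (t / 2) := by
    have : s ^ 2 / 9 ≤ (V - w) ^ 2 := by nlinarith
    have : (s ^ 2 / 9) * (t / 2) ≤ (1 + (V - w) ^ 2) * (t / 2) :=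
      mul_le_mul_of_nonneg_right (by linarith) (by positivity)
    have e2 : (s ^ 2 / 9) * (t / 2) = s / 18 := by linear_combination s / 18 * hst
    linarith
  have ht1 : t ≤ 1 / 36 := by
    by_contra h
    push Not at h
    nlinarith
  have f5 : 1 ≤ (1 + (V - w) ^ 2) * (t + d) - (2 * V - w) * P := by linarith
  have := mul_le_mul_of_nonneg_left f5 hw
  linarith

lemma ric_low (s t g d y : ℝ) (hs : 36 ≤ s) (hst : s * t = 1)
    (hg : |g| ≤ t ^ 9) (hd : |d| ≤ t ^ 9) (hy : y ≤ s / 3) :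
    1 / 2 < (1 + y ^ 2) * (1 + g - (t + d) * y) := by
  have ht0 : 0 < t := by
    by_contra h
    push Not at h
    nlinarith
  have ht1 : t ≤ 1 / 36 := by
    by_contra h
    push Not at h
    nlinarith
  have h8 : t ^ 8 ≤ (1 / 36) ^ 8 := pow_le_pow_left₀ ht0.le ht1 8
  have h9 : t ^ 9 ≤ t / 100 := by
    have : t ^ 9 = t ^ 8 * t := by ring
    rw [this]; norm_num at h8; nlinarith
  have hd' := abs_le.1 hd
  have hg' := abs_le.1 hg
  have h1 : 0 ≤ t + d := by linarith
  have h2 : (t + d) * y ≤ (t + t / 100) * (s / 3) := by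
    calc (t + d) * y ≤ (t + d) * (s / 3) := mul_le_mul_of_nonneg_left hy h1
      _ ≤ _ := mul_le_mul_of_nonneg_right (by linarith) (by linarith)
  have h3 : (t + t / 100) * (s / 3) = 101 / 300 := by linear_combination 101 / 300 * hst
  nlinarith [sq_nonneg y]

theorem riccati_second_order_asymptotics
    (s₀ C : ℝ) (hs₀ : 1 < s₀) (hC : 0 < C)
    (γ δ φ φ' : ℝ → ℝ)
    (hγ : Continuous γ) (hδ : Continuous δ)
    (hbound : ∀ s ∈ Ici s₀, |γ s| + |δ s| ≤ C / s ^ 10)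
    (hφ : ∀ s ∈ Ici s₀, HasDerivWithinAt φ (φ' s) (Ici s₀) s)
    (hφ' : ContinuousOn φ' (Ici s₀))
    (heq : ∀ s ∈ Ici s₀,
      φ' s = (1 + φ s ^ 2) * (1 + γ s - (1 / s + δ s) * φ s)) :
    Tendsto (fun s => s ^ 2 * (s * (φ s - s) + 1)) atTop (nhds (-2)) ∧
      (fun s => φ s - (s - 1 / s - 2 / s ^ 3)) =o[atTop] fun s => 1 / s ^ 3 := by
  have main : Tendsto (fun s => s ^ 2 * (s * (φ s - s) + 1)) atTop (nhds (-2)) := by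
    obtain ⟨S, hS⟩ : ∃ S, S = max s₀ (max 36 C) := ⟨_, rfl⟩
    have hSs : s₀ ≤ S := by rw [hS]; exact le_max_left _ _
    have hS36 : 36 ≤ S := by rw [hS]; exact (le_max_left _ _).trans (le_max_right _ _)
    have hSC : C ≤ S := by rw [hS]; exact (le_max_right _ _).trans (le_max_right _ _)
    have bd : ∀ s, S ≤ s → |γ s| ≤ s⁻¹ ^ 9 ∧ |δ s| ≤ s⁻¹ ^ 9 := by
      intro s hs
      have h := hbound s (hSs.trans hs)
      have hs0 : 0 < s := by linarith
      have : C / s ^ 10 ≤ s⁻¹ ^ 9 := by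
        rw [inv_pow, div_le_iff₀ (by positivity)]
        have : (s ^ 9)⁻¹ * s ^ 10 = s := by field_simp
        linarith
      constructor <;> linarith [abs_nonneg (γ s), abs_nonneg (δ s)]
    have heq' : ∀ s, S ≤ s → φ' s = (1 + φ s ^ 2) * (1 + γ s - (s⁻¹ + δ s) * φ s) := by
      intro s hs
      rw [heq s (hSs.trans hs), one_div]
    have hst : ∀ s, S ≤ s → s * s⁻¹ = 1 := fun s hs => mul_inv_cancel₀ (by linarith)
    have hcont : ContinuousOn φ (Ici s₀) := fun s hs => (hφ s hs).continuousWithinAt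
    have hder : ∀ s, S ≤ s → HasDerivWithinAt φ (φ' s) (Ici s) s := fun s hs =>
      (hφ s (hSs.trans hs)).mono (Ici_subset_Ici.2 (hSs.trans hs))
    have hcI : ∀ a b, S ≤ a → ContinuousOn φ (Icc a b) := fun a b ha =>
      hcont.mono (fun x hx => (hSs.trans ha).trans hx.1)
    -- reach s/3
    obtain ⟨T, hT, hTφ⟩ : ∃ T, S ≤ T ∧ T / 3 ≤ φ T := by
      by_contra hcon
      push Not at hcon
      obtain ⟨b, hb⟩ : ∃ b, b = S + 6 * (|φ S| + S) := ⟨_, rfl⟩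
      have hSb : S ≤ b := by rw [hb]; nlinarith [abs_nonneg (φ S)]
      have := image_le_of_deriv_right_lt_deriv_boundary' (f := fun s => φ S + (s - S) / 2)
        (f' := fun _ => 1 / 2) (a := S) (b := b) (B := φ) (B' := φ') (by fun_prop)
        (fun x hx => by
          have := (((hasDerivAt_id x).sub_const S).div_const 2).const_add (φ S)
          simpa using this.hasDerivWithinAt)
        (by simp) (hcI S b le_rfl) (fun x hx => hder x hx.1)
        (fun x hx _ => by
          rw [heq' x hx.1]
          exact ric_low x x⁻¹ _ _ _ (hS36.trans hx.1) (hst x hx.1) (bd x hx.1).1 (bd x hx.1).2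
            (hcon x hx.1).le) (right_mem_Icc.2 hSb)
      have h2 := hcon b hSb
      nlinarith [neg_abs_le (φ S)]
    have hthird : ∀ s, T ≤ s → s / 3 ≤ φ s := by
      intro b hb
      exact image_le_of_deriv_right_lt_deriv_boundary' (f := fun s => s / 3)
        (f' := fun _ => 1 / 3) (a := T) (b := b) (B := φ) (B' := φ') (by fun_prop)
        (fun x hx => by
          have := ((hasDerivAt_id x).div_const 3)
          simpa using this.hasDerivWithinAt)
        hTφ (hcI T b hT) (fun x hx => hder x (hT.trans hx.1))
        (fun x hx h => by
          have hx1 := hT.trans hx.1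
          rw [heq' x hx1]
          have := ric_low x x⁻¹ _ _ (φ x) (hS36.trans hx1) (hst x hx1) (bd x hx1).1 (bd x hx1).2
            h.ge
          linarith) (right_mem_Icc.2 hb)
    have hVder : ∀ a x : ℝ, x ≠ 0 → HasDerivAt (fun s : ℝ => s - s⁻¹ - a * s⁻¹ ^ 3)
        (1 + x⁻¹ ^ 2 + 3 * a * x⁻¹ ^ 4) x := by
      intro a x hx
      have h1 := hasDerivAt_inv hx
      have := ((hasDerivAt_id x).sub h1).sub ((h1.pow 3).const_mul a)
      refine HasDerivAt.congr_deriv this ?_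
      rw [← inv_pow]
      push_cast
      ring
    have hEder : ∀ M x : ℝ, HasDerivAt (fun s : ℝ => M * Real.exp (-s)) (-(M * Real.exp (-x))) x := by
      intro M x
      have := ((hasDerivAt_id x).neg.exp).const_mul M
      simpa using this
    have hsmall : ∀ ε : ℝ, 0 < ε → ∃ R, T ≤ R ∧ ∀ s, R ≤ s → 200 * s⁻¹ ^ 4 < ε * s⁻¹ ^ 2 := by
      intro ε hε
      refine ⟨max T (200 / ε + 1), le_max_left _ _, fun s hs => ?_⟩
      have h1 : 200 / ε + 1 ≤ s := (le_max_right _ _).trans hs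
      have h2 : T ≤ s := (le_max_left _ _).trans hs
      have hs36 : 36 ≤ s := by linarith
      have h3 : 200 < ε * s := by
        have : 200 / ε < s := by linarith
        rw [div_lt_iff₀ hε] at this
        linarith
      have hpos : 0 < s⁻¹ := by positivity
      have h4 : 200 < ε * s ^ 2 := by nlinarith
      have h5 : 0 < s⁻¹ ^ 4 := by positivity
      calc 200 * s⁻¹ ^ 4 < (ε * s ^ 2) * s⁻¹ ^ 4 := mul_lt_mul_of_pos_right h4 h5
        _ = ε * s⁻¹ ^ 2 := by field_simp
    have hdecay : ∀ M : ℝ, Tendsto (fun s : ℝ => M * (s ^ 3 * Real.exp (-s))) atTop (nhds 0) := by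
      intro M
      simpa using (Real.tendsto_pow_mul_exp_neg_atTop_nhds_zero 3).const_mul M
    have hup : ∀ ε : ℝ, 0 < ε → ε ≤ 1 → ∃ R M, T ≤ R ∧ ∀ s, R ≤ s →
        φ s ≤ s - s⁻¹ - (2 - ε) * s⁻¹ ^ 3 + M * Real.exp (-s) := by
      intro ε hε hε1
      obtain ⟨R, hR, hRs⟩ := hsmall ε hε
      obtain ⟨M0, hM0⟩ : ∃ M0, M0 = max (φ R - (R - R⁻¹ - (2 - ε) * R⁻¹ ^ 3)) 0 := ⟨_, rfl⟩
      have hM1 : 0 ≤ M0 := by rw [hM0]; exact le_max_right _ _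
      have hM2 : φ R - (R - R⁻¹ - (2 - ε) * R⁻¹ ^ 3) ≤ M0 := by rw [hM0]; exact le_max_left _ _
      refine ⟨R, M0 * Real.exp R, hR, fun b hb => ?_⟩
      have hD : ∀ x, R ≤ x → HasDerivAt (fun s : ℝ => s - s⁻¹ - (2 - ε) * s⁻¹ ^ 3 +
          M0 * Real.exp R * Real.exp (-s)) _ x := fun x hx =>
        (hVder (2 - ε) x (by linarith)).add (hEder (M0 * Real.exp R) x)
      refine image_le_of_deriv_right_lt_deriv_boundary' (f := φ) (f' := φ') (a := R) (b := b)
        (hcI R b (hT.trans hR)) (fun x hx => hder x ((hT.trans hR).trans hx.1)) ?_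
        (fun x hx => (hD x hx.1).continuousAt.continuousWithinAt)
        (fun x hx => (hD x hx.1).hasDerivWithinAt)
        (fun x hx h => ?_) (right_mem_Icc.2 hb)
      · rw [mul_assoc, ← Real.exp_add]
        simp only [add_neg_cancel, Real.exp_zero]
        linarith
      · have hx1 := (hT.trans hR).trans hx.1
        rw [heq' x hx1, h]
        have := ric_upper x x⁻¹ (2 - ε) _ _ _ (M0 * Real.exp R * Real.exp (-x)) (hS36.trans hx1)
          (hst x hx1) (by linarith) (by linarith) (bd x hx1).1 (bd x hx1).2 rfl (by positivity)
          (by have := hRs x hx.1; linarith)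
        linarith
    have hlo : ∀ ε : ℝ, 0 < ε → ε ≤ 1 → ∃ R M, T ≤ R ∧ ∀ s, R ≤ s →
        s - s⁻¹ - (2 + ε) * s⁻¹ ^ 3 - M * Real.exp (-s) ≤ φ s := by
      intro ε hε hε1
      obtain ⟨R, hR, hRs⟩ := hsmall ε hε
      obtain ⟨M0, hM0⟩ : ∃ M0, M0 = max ((R - R⁻¹ - (2 + ε) * R⁻¹ ^ 3) - φ R) 0 := ⟨_, rfl⟩
      have hM1 : 0 ≤ M0 := by rw [hM0]; exact le_max_right _ _
      have hM2 : (R - R⁻¹ - (2 + ε) * R⁻¹ ^ 3) - φ R ≤ M0 := by rw [hM0]; exact le_max_left _ _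
      refine ⟨R, M0 * Real.exp R, hR, fun b hb => ?_⟩
      have hD : ∀ x, R ≤ x → HasDerivAt (fun s : ℝ => s - s⁻¹ - (2 + ε) * s⁻¹ ^ 3 -
          M0 * Real.exp R * Real.exp (-s)) _ x := fun x hx =>
        (hVder (2 + ε) x (by linarith)).sub (hEder (M0 * Real.exp R) x)
      refine image_le_of_deriv_right_lt_deriv_boundary' (B := φ) (B' := φ') (a := R) (b := b)
        (fun x hx => (hD x hx.1).continuousAt.continuousWithinAt)
        (fun x hx => (hD x hx.1).hasDerivWithinAt) ?_
        (hcI R b (hT.trans hR)) (fun x hx => hder x ((hT.trans hR).trans hx.1)) 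
        (fun x hx h => ?_) (right_mem_Icc.2 hb)
      · rw [mul_assoc, ← Real.exp_add]
        simp only [add_neg_cancel, Real.exp_zero]
        linarith
      · have hx1 := (hT.trans hR).trans hx.1
        have h3 := hthird x (hR.trans hx.1)
        rw [← h] at h3
        rw [heq' x hx1, ← h]
        have := ric_lower x x⁻¹ (2 + ε) _ _ _ (M0 * Real.exp R * Real.exp (-x)) (hS36.trans hx1)
          (hst x hx1) (by linarith) (by linarith) (bd x hx1).1 (bd x hx1).2 rfl (by positivity)
          h3 (by have := hRs x hx.1; linarith)
        linarith
    rw [Metric.tendsto_atTop']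
    intro e he
    obtain ⟨ε, hε⟩ : ∃ ε, ε = min (e / 2) 1 := ⟨_, rfl⟩
    have hε0 : 0 < ε := by rw [hε]; positivity
    have hε1 : ε ≤ 1 := by rw [hε]; exact min_le_right _ _
    have hε2 : ε ≤ e / 2 := by rw [hε]; exact min_le_left _ _
    obtain ⟨R1, M1, hR1, h1⟩ := hup ε hε0 hε1
    obtain ⟨R2, M2, hR2, h2⟩ := hlo ε hε0 hε1
    have ev : ∀ᶠ s in atTop, dist (s ^ 2 * (s * (φ s - s) + 1)) (-2) < e := by
      filter_upwards [eventually_ge_atTop R1, eventually_ge_atTop R2,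
        (hdecay M1).eventually_lt_const (half_pos he),
        (hdecay M2).eventually_lt_const (half_pos he)] with s a1 a2 a3 a4
      have hs0 : 0 < s := by linarith
      have h1 := mul_le_mul_of_nonneg_left (h1 s a1) (pow_pos hs0 3).le
      have h2 := mul_le_mul_of_nonneg_left (h2 s a2) (pow_pos hs0 3).le
      have e1 : s ^ 3 * (s - s⁻¹ - (2 - ε) * s⁻¹ ^ 3 + M1 * Real.exp (-s))
        = s ^ 4 - s ^ 2 - (2 - ε) + M1 * (s ^ 3 * Real.exp (-s)) := by field_simp
      have e2 : s ^ 3 * (s - s⁻¹ - (2 + ε) * s⁻¹ ^ 3 - M2 * Real.exp (-s))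
        = s ^ 4 - s ^ 2 - (2 + ε) - M2 * (s ^ 3 * Real.exp (-s)) := by field_simp
      rw [e1] at h1
      rw [e2] at h2
      rw [Real.dist_eq, abs_lt]
      constructor <;> nlinarith
    obtain ⟨N, hN⟩ := eventually_atTop.1 ev
    exact ⟨N, fun n hn => hN n hn.le⟩
  refine ⟨main, ?_⟩
  have h0 : Tendsto (fun s => s ^ 2 * (s * (φ s - s) + 1) + 2) atTop (nhds 0) := by
    simpa using main.add_const 2
  have h1 := (isLittleO_one_iff ℝ).2 h0
  have h2 := h1.mul_isBigO (isBigO_refl (fun s : ℝ => 1 / s ^ 3) atTop)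
  refine h2.congr' ?_ ?_
  · filter_upwards [eventually_gt_atTop 0] with s hs
    field_simp
    ring
  · filter_upwards with s
    simp
end

section
/- There exist a constant C' > 0 and s₁ ≥ s₀ such that |φ(s) − (s − 1/s)| ≤ C'/s² for all s ≥ s₁; that is, φ(s) = s − 1/s + O(s⁻²) as s → ∞. -/
open Set Filter

lemma ric_trap (a c : ℝ) (ha : 0 < a) (hc : 0 < c) (g g' : ℝ → ℝ)
    (hg : ∀ s ∈ Ici a, HasDerivWithinAt g (g' s) (Ici a) s)
    (h : ∀ s ∈ Ici a, 0 ≤ g s → g' s ≤ -(c * s⁻¹)) :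
    ∃ b, a ≤ b ∧ ∀ s ≥ b, g s ≤ 0 := by
  have hcont : ContinuousOn g (Ici a) := fun s hs => (hg s hs).continuousWithinAt
  have ex : ∃ b, a ≤ b ∧ g b ≤ 0 := by
    by_contra hne
    push Not at hne
    have hanti : AntitoneOn (fun s => g s + c * Real.log s) (Ici a) := by
      apply antitoneOn_of_hasDerivWithinAt_nonpos (f' := fun s => g' s + c * s⁻¹) (convex_Ici a)
      · apply hcont.add
        apply ContinuousOn.mul continuousOn_const
        apply Real.continuousOn_log.mono
        intro s hs
        have : a ≤ s := hs
        have : s ≠ 0 := by linarith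
        simpa using this
      · intro s hs
        rw [interior_Ici] at hs ⊢
        have h1 : a < s := hs
        have h2 : s ≠ 0 := by linarith
        exact ((hg s h1.le).mono Ioi_subset_Ici_self).add
          (((Real.hasDerivAt_log h2).hasDerivWithinAt).const_mul c)
      · intro s hs
        rw [interior_Ici] at hs
        have h1 : a < s := hs
        have := h s h1.le (hne s h1.le).le
        linarith
    have ht : Tendsto (fun s => c * Real.log s) atTop atTop :=
      Real.tendsto_log_atTop.const_mul_atTop hc
    obtain ⟨t, ht1, ht2⟩ := ((ht.eventually_ge_atTop (g a + c * Real.log a)).and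
      (eventually_ge_atTop a)).exists
    have := hanti (mem_Ici.2 le_rfl) (mem_Ici.2 ht2) ht2
    have := hne t ht2
    simp only at *
    linarith
  obtain ⟨b, hab, hb⟩ := ex
  refine ⟨b, hab, fun s hs => ?_⟩
  have key := image_le_of_deriv_right_lt_deriv_boundary' (f := g) (f' := g') (a := b) (b := s)
    (B := fun _ => 0) (B' := fun _ => 0)
    (hcont.mono (fun x hx => le_trans hab hx.1))
    (fun x hx => (hg x (le_trans hab hx.1)).mono (Ici_subset_Ici.2 (le_trans hab hx.1)))
    hb continuousOn_const (fun x _ => hasDerivWithinAt_const _ _ _)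
    (fun x hx h0 => by
      have hx1 : a ≤ x := le_trans hab hx.1
      have := h x hx1 h0.ge
      have : 0 < c * x⁻¹ := mul_pos hc (inv_pos.2 (by linarith))
      linarith)
  exact key ⟨hs, le_rfl⟩

/-- Bounds for the second factor. -/
lemma ric_low1 (s r p q x : ℝ) (hr : 0 < r) (hr1 : r ≤ 1 / 100) (hsr : s * r = 1)
    (hpq : |p| + |q| ≤ r ^ 9) (hx : x ≤ 2) :
    1 / 4 * r ≤ (1 + x ^ 2) * (1 + p - (r + q) * x) := by
  have hr9 : r ^ 9 ≤ r * (1 / 100) := by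
    have : r ^ 8 ≤ (1/100) ^ 8 := by gcongr
    nlinarith
  have hp := abs_le.1 (le_refl |p|)
  have hq := abs_le.1 (le_refl |q|)
  have hp0 := abs_nonneg p
  have hq0 := abs_nonneg q
  have h1 : (r + q) * x ≤ (r + q) * 2 := mul_le_mul_of_nonneg_left hx (by linarith)
  have h2 : 1 / 4 ≤ 1 + p - (r + q) * x := by linarith
  nlinarith [sq_nonneg x]

set_option maxHeartbeats 1000000 in
lemma ric_low2 (s r p q x : ℝ) (hr : 0 < r) (hr1 : r ≤ 1 / 100) (hsr : s * r = 1)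
    (hpq : |p| + |q| ≤ r ^ 9) (hx : 2 ≤ x) (hxu : x ≤ s - r - r ^ 2) :
    1 + r ^ 2 + 2 * r ^ 3 + 1 / 4 * r ≤ (1 + x ^ 2) * (1 + p - (r + q) * x) := by
  have hs : 100 ≤ s := by nlinarith
  have hp := abs_le.1 (le_refl |p|)
  have hq := abs_le.1 (le_refl |q|)
  have hp0 := abs_nonneg p
  have hq0 := abs_nonneg q
  have hr2 : r ^ 2 ≤ r * (1 / 100) := by nlinarith
  have hr3 : r ^ 3 ≤ r ^ 2 * (1 / 100) := by nlinarith [sq_nonneg r]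
  have hr4 : r ^ 4 ≤ r ^ 3 * (1 / 100) := by nlinarith [pow_pos hr 3]
  have hr3p := pow_pos hr 3
  have hr4p := pow_pos hr 4
  have hr8 : r ^ 8 ≤ r ^ 4 * (1 / 100) ^ 4 := by
    have : r ^ 4 ≤ (1/100) ^ 4 := by gcongr
    nlinarith
  have hxs : x ≤ s := by nlinarith
  have hqx : q * x ≤ |q| * s := mul_le_mul hq.2 hxs (by linarith) hq0
  have h9 : r ^ 9 * s = r ^ 8 := by linear_combination r ^ 8 * hsr
  have hb : (|p| + |q|) * s ≤ r ^ 8 := by rw [← h9]; gcongr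
  have hpb : |p| ≤ |p| * s := by nlinarith
  have hfac : (s - x) * r - r ^ 8 ≤ 1 + p - (r + q) * x := by nlinarith
  have hd : (s - x) * r ≥ r ^ 2 + r ^ 3 := by nlinarith
  have hs2 : s ^ 2 * r ^ 2 = 1 := by rw [← mul_pow, hsr, one_pow]
  have hs3 : s ^ 2 * r ^ 3 = r := by linear_combination r * hs2
  have hs4 : s ^ 2 * r ^ 4 = r ^ 2 := by linear_combination r ^ 2 * hs2
  have main : 1 + r ^ 2 + 2 * r ^ 3 + 1 / 4 * r ≤ (1 + x ^ 2) * ((s - x) * r - r ^ 8) := by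
    rcases le_total x (s / 2) with hc | hc
    · have h1 : 4 / 10 ≤ (s - x) * r - r ^ 8 := by nlinarith
      have h2 : 5 ≤ 1 + x ^ 2 := by nlinarith
      nlinarith
    · rcases le_total (8 * r) (s - x) with hc2 | hc2
      · have h1 : 7 * r ^ 2 ≤ (s - x) * r - r ^ 8 := by nlinarith
        have h2 : s ^ 2 / 4 ≤ 1 + x ^ 2 := by nlinarith
        have h3 : s ^ 2 / 4 * (7 * r ^ 2) ≤ (1 + x ^ 2) * ((s - x) * r - r ^ 8) :=
          mul_le_mul h2 h1 (by positivity) (by positivity)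
        have h4 : s ^ 2 / 4 * (7 * r ^ 2) = 7 / 4 := by linear_combination 7 / 4 * hs2
        linarith
      · have h1 : r ^ 2 + r ^ 3 - r ^ 4 ≤ (s - x) * r - r ^ 8 := by linarith
        have h5 : (s - 8 * r) ^ 2 ≤ x ^ 2 := pow_le_pow_left₀ (by linarith) (by linarith) 2
        have h2 : s ^ 2 - 16 ≤ 1 + x ^ 2 := by nlinarith only [h5, hsr, sq_nonneg r]
        have h3 : (s ^ 2 - 16) * (r ^ 2 + r ^ 3 - r ^ 4) ≤ (1 + x ^ 2) * ((s - x) * r - r ^ 8) := by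
          apply mul_le_mul h2 h1
          · linarith
          · positivity
        have h4 : (s ^ 2 - 16) * (r ^ 2 + r ^ 3 - r ^ 4)
            = 1 + r - r ^ 2 - 16 * (r ^ 2 + r ^ 3 - r ^ 4) := by
          linear_combination hs2 + hs3 - hs4
        linarith
  exact main.trans (mul_le_mul_of_nonneg_left hfac (by positivity))

set_option maxHeartbeats 1000000 in
lemma ric_up (s r p q x : ℝ) (hr : 0 < r) (hr1 : r ≤ 1 / 100) (hsr : s * r = 1)
    (hpq : |p| + |q| ≤ r ^ 9) (hxu : s - r + r ^ 2 ≤ x) :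
    (1 + x ^ 2) * (1 + p - (r + q) * x) ≤ 1 + r ^ 2 - 2 * r ^ 3 - 1 / 4 * r := by
  have hs : 100 ≤ s := by nlinarith
  have hp := abs_le.1 (le_refl |p|)
  have hq := abs_le.1 (le_refl |q|)
  have hp0 := abs_nonneg p
  have hq0 := abs_nonneg q
  have hr2 : r ^ 2 ≤ r * (1 / 100) := by nlinarith
  have hr3 : r ^ 3 ≤ r ^ 2 * (1 / 100) := by nlinarith [sq_nonneg r]
  have hr4 : r ^ 4 ≤ r ^ 3 * (1 / 100) := by nlinarith [pow_pos hr 3]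
  have hr3p := pow_pos hr 3
  have hr4p := pow_pos hr 4
  have hr8 : r ^ 8 ≤ r ^ 4 * (1 / 100) ^ 4 := by
    have : r ^ 4 ≤ (1/100) ^ 4 := by gcongr
    nlinarith
  have hr9 : r ^ 9 ≤ r * (1 / 100) := by
    have : r ^ 8 ≤ (1/100) ^ 8 := by gcongr
    nlinarith
  have hs2 : s ^ 2 * r ^ 2 = 1 := by rw [← mul_pow, hsr, one_pow]
  have hs3 : s ^ 2 * r ^ 3 = r := by linear_combination r * hs2
  have hs4 : s ^ 2 * r ^ 4 = r ^ 2 := by linear_combination r ^ 2 * hs2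
  have hx0 : 0 < x := by nlinarith
  have hpos : 0 ≤ 1 + r ^ 2 - 2 * r ^ 3 - 1 / 4 * r := by nlinarith
  rcases le_total (1 + p - (r + q) * x) 0 with hf | hf
  · exact (mul_nonpos_of_nonneg_of_nonpos (by positivity) hf).trans hpos
  have hx2 : x ≤ 2 * s := by
    by_contra hcon
    push Not at hcon
    have h1 : (r * (99 / 100)) * (2 * s) < (r + q) * x := by
      apply mul_lt_mul' (by linarith) hcon (by linarith) (by linarith)
    nlinarith
  have hqx : -q * x ≤ |q| * (2 * s) := mul_le_mul (by linarith) hx2 hx0.le hq0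
  have h9 : r ^ 9 * s = r ^ 8 := by linear_combination r ^ 8 * hsr
  have hb : (|p| + |q|) * s ≤ r ^ 8 := by rw [← h9]; gcongr
  have hpb : |p| ≤ |p| * s := by nlinarith
  have hfac : 1 + p - (r + q) * x ≤ (s - x) * r + 2 * r ^ 8 := by nlinarith
  rcases le_total x s with hc | hc
  · have h1 : 1 + p - (r + q) * x ≤ r ^ 2 - r ^ 3 + r ^ 4 := by nlinarith
    have h2 : 1 + x ^ 2 ≤ 1 + s ^ 2 := by gcongr
    have h3 := mul_le_mul h2 h1 hf (by positivity)
    have h4 : (1 + s ^ 2) * (r ^ 2 - r ^ 3 + r ^ 4)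
        = 1 - r + r ^ 2 + (r ^ 2 - r ^ 3 + r ^ 4) := by
      linear_combination hs2 - hs3 + hs4
    linarith
  · have h1 : 1 + p - (r + q) * x ≤ r ^ 4 := by nlinarith
    have h2 : 1 + x ^ 2 ≤ 1 + (2 * s) ^ 2 := by gcongr
    have h3 := mul_le_mul h2 h1 hf (by positivity)
    have h4 : (1 + (2 * s) ^ 2) * r ^ 4 = r ^ 4 + 4 * r ^ 2 := by
      linear_combination 4 * hs4
    linarith

lemma ric_deriv (k s : ℝ) (hs : s ≠ 0) :
    HasDerivAt (fun s : ℝ => s - s⁻¹ + k * (s⁻¹) ^ 2) (1 + (s⁻¹) ^ 2 - 2 * k * (s⁻¹) ^ 3) s := by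
  have h1 := hasDerivAt_inv hs
  have h := ((hasDerivAt_id s).sub h1).add ((h1.pow 2).const_mul k)
  refine h.congr_deriv ?_
  simp
  field_simp
  ring

/-- The key asymptotic lemma: `φ(s) = s − 1/s + O(s⁻²)` for a solution of the
perturbed Riccati-type equation for the slope of the translator's graphical end. -/
theorem riccati_asymptotic_lemma
    (s₀ C : ℝ) (hs₀ : 1 < s₀) (hC : 0 < C)
    (γ δ φ φ' : ℝ → ℝ)
    (hγ : Continuous γ) (hδ : Continuous δ)
    (hbound : ∀ s ∈ Ici s₀, |γ s| + |δ s| ≤ C / s ^ 10)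
    (hφ : ∀ s ∈ Ici s₀, HasDerivWithinAt φ (φ' s) (Ici s₀) s)
    (hφ' : ContinuousOn φ' (Ici s₀))
    (heq : ∀ s ∈ Ici s₀,
      φ' s = (1 + φ s ^ 2) * (1 + γ s - (1 / s + δ s) * φ s)) :
    ∃ C' > (0 : ℝ), ∃ s₁, s₀ ≤ s₁ ∧
      ∀ s ≥ s₁, |φ s - (s - 1 / s)| ≤ C' / s ^ 2 := by
  obtain ⟨a, ha0, ha1, haC⟩ : ∃ a, s₀ ≤ a ∧ 100 ≤ a ∧ C ≤ a :=
    ⟨max s₀ (max 100 C), le_max_left _ _, (le_max_left _ _).trans (le_max_right _ _),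
      (le_max_right _ _).trans (le_max_right _ _)⟩
  have hr : ∀ s, a ≤ s → 0 < s⁻¹ ∧ s⁻¹ ≤ 1 / 100 ∧ s * s⁻¹ = 1 ∧
      |γ s| + |δ s| ≤ (s⁻¹) ^ 9 := by
    intro s hs
    have hs0 : 0 < s := by linarith
    refine ⟨inv_pos.2 hs0, ?_, mul_inv_cancel₀ hs0.ne', ?_⟩
    · rw [one_div]
      exact inv_anti₀ (by norm_num) (by linarith)
    · refine (hbound s (ha0.trans hs)).trans ?_
      rw [div_le_iff₀ (by positivity)]
      have : (s⁻¹) ^ 9 * s ^ 10 = s := by field_simp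
      linarith
  have he : ∀ s, a ≤ s → φ' s = (1 + φ s ^ 2) * (1 + γ s - (s⁻¹ + δ s) * φ s) := by
    intro s hs
    rw [heq s (ha0.trans hs), one_div]
  have hd : ∀ b, a ≤ b → ∀ s ∈ Ici b, HasDerivWithinAt φ (φ' s) (Ici b) s := fun b hb s hs =>
    (hφ s ((ha0.trans hb).trans hs)).mono (Ici_subset_Ici.2 (ha0.trans hb))
  obtain ⟨b, hab, hb⟩ := ric_trap a (1 / 4) (by linarith) (by norm_num)
    (fun s => 2 - φ s) (fun s => - φ' s)
    (fun s hs => (hd a le_rfl s hs).const_sub 2) (by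
      intro s hs h0
      obtain ⟨h1, h2, h3, h4⟩ := hr s hs
      have := ric_low1 s s⁻¹ (γ s) (δ s) (φ s) h1 h2 h3 h4 (by linarith)
      rw [he s hs]
      linarith)
  obtain ⟨c, hbc, hc⟩ := ric_trap b (1 / 4) (by linarith) (by norm_num)
    (fun s => (s - s⁻¹ + (-1) * (s⁻¹) ^ 2) - φ s)
    (fun s => (1 + (s⁻¹) ^ 2 - 2 * (-1) * (s⁻¹) ^ 3) - φ' s)
    (fun s hs => by
      have hs' : b ≤ s := hs
      exact (ric_deriv (-1) s (by linarith)).hasDerivWithinAt.sub (hd b hab s hs)) (by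
      intro s hs h0
      have hs' : a ≤ s := hab.trans hs
      obtain ⟨h1, h2, h3, h4⟩ := hr s hs'
      have h5 := hb s hs
      have := ric_low2 s s⁻¹ (γ s) (δ s) (φ s) h1 h2 h3 h4 (by linarith) (by linarith)
      rw [he s hs']
      linarith)
  obtain ⟨d, had, hd'⟩ := ric_trap a (1 / 4) (by linarith) (by norm_num)
    (fun s => φ s - (s - s⁻¹ + 1 * (s⁻¹) ^ 2))
    (fun s => φ' s - (1 + (s⁻¹) ^ 2 - 2 * 1 * (s⁻¹) ^ 3))
    (fun s hs => by
      have hs' : a ≤ s := hs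
      exact (hd a le_rfl s hs).sub (ric_deriv 1 s (by linarith)).hasDerivWithinAt) (by
      intro s hs h0
      obtain ⟨h1, h2, h3, h4⟩ := hr s hs
      have := ric_up s s⁻¹ (γ s) (δ s) (φ s) h1 h2 h3 h4 (by linarith)
      rw [he s hs]
      linarith)
  refine ⟨1, one_pos, max c d, ?_, fun s hs => ?_⟩
  · exact (ha0.trans had).trans (le_max_right _ _)
  · have h1 := hc s ((le_max_left _ _).trans hs)
    have h2 := hd' s ((le_max_right _ _).trans hs)
    have : 1 / s ^ 2 = (s⁻¹) ^ 2 := by simp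
    rw [this, one_div, abs_le]
    constructor <;> linarith
end

section
/- Let s₀ > 0 and let λ : [s₀, ∞) → ℝ be continuously differentiable with λ(s)/s → 0 as s → ∞. Suppose λ'(s) = −(λ(s) + 1)·s + e(s) for all s ≥ s₀, where e : [s₀, ∞) → ℝ satisfies e(s)/s → 0 as s → ∞. Then λ(s) → −1 as s → ∞. -/
open Set Filter

theorem relax_upper_aux (S ε : ℝ) (hε : 0 < ε) (u u' : ℝ → ℝ)
    (hu : ∀ s ∈ Ici S, HasDerivAt u (u' s) s)
    (h : ∀ s ∈ Ici S, u' s ≤ -(u s - ε) * s) :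
    ∀ᶠ s in atTop, u s < 2 * ε := by
  have hd : ∀ s ∈ Ici S, HasDerivAt (fun s => (u s - ε) * Real.exp (s ^ 2 / 2))
      (u' s * Real.exp (s ^ 2 / 2) + (u s - ε) * (Real.exp (s ^ 2 / 2) * s)) s := by
    intro s hs
    have h1 : HasDerivAt (fun s : ℝ => s ^ 2 / 2) s s := by
      have := (hasDerivAt_pow 2 s).div_const 2
      have h2 : ((2 : ℕ) : ℝ) * s ^ (2 - 1) / 2 = s := by norm_num
      rw [h2] at this
      exact this
    exact ((hu s hs).sub_const ε).mul h1.exp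
  have hanti : AntitoneOn (fun s => (u s - ε) * Real.exp (s ^ 2 / 2)) (Ici S) := by
    apply antitoneOn_of_deriv_nonpos (convex_Ici S)
    · exact fun s hs => (hd s hs).continuousAt.continuousWithinAt
    · exact fun s hs => (hd s (interior_subset hs)).differentiableAt.differentiableWithinAt
    · intro s hs
      have hs := interior_subset hs
      rw [(hd s hs).deriv]
      have := h s hs
      nlinarith [Real.exp_pos (s ^ 2 / 2)]
  have hT : Tendsto (fun s : ℝ => ε * Real.exp (s ^ 2 / 2)) atTop atTop := by
    apply Tendsto.const_mul_atTop hε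
    apply Real.tendsto_exp_atTop.comp
    exact (tendsto_pow_atTop (by norm_num)).atTop_div_const (by norm_num)
  filter_upwards [hT.eventually_gt_atTop ((u S - ε) * Real.exp (S ^ 2 / 2)),
    eventually_ge_atTop S] with s h1 h2
  have h3 := hanti (mem_Ici.2 le_rfl) (mem_Ici.2 h2) h2
  have h4 := lt_of_mul_lt_mul_right (lt_of_le_of_lt h3 h1) (Real.exp_pos _).le
  linarith

/-- Relaxation step: a sub-linear solution of `λ' = −(λ + 1)s + o(s)` converges
to the equilibrium value `−1`. -/
theorem sublinear_relaxation_to_neg_one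
    (s₀ : ℝ) (hs₀ : 0 < s₀)
    (l l' e : ℝ → ℝ)
    (hl : ∀ s ∈ Ici s₀, HasDerivWithinAt l (l' s) (Ici s₀) s)
    (hl' : ContinuousOn l' (Ici s₀))
    (hsub : Tendsto (fun s => l s / s) atTop (nhds 0))
    (heq : ∀ s ∈ Ici s₀, l' s = -(l s + 1) * s + e s)
    (he : Tendsto (fun s => e s / s) atTop (nhds 0)) :
    Tendsto l atTop (nhds (-1)) := by
  rw [Metric.tendsto_nhds]
  intro δ hδ
  have hε : 0 < δ / 2 := by linarith
  have hev := (Metric.tendsto_nhds.1 he (δ / 2) hε).and (eventually_gt_atTop s₀)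
  obtain ⟨S, hS⟩ := eventually_atTop.1 hev
  have hb : ∀ s ∈ Ici S, -(δ / 2 * s) < e s ∧ e s < δ / 2 * s := by
    intro s hs
    obtain ⟨h1, h2⟩ := hS s hs
    have hp : 0 < s := hs₀.trans h2
    rw [Real.dist_eq, sub_zero, abs_lt, lt_div_iff₀ hp, div_lt_iff₀ hp] at h1
    exact ⟨by linarith [h1.1], h1.2⟩
  have hd : ∀ s ∈ Ici S, HasDerivAt (fun s => l s + 1) (l' s) s := fun s hs =>
    ((hl s (hS s hs).2.le).hasDerivAt (Ici_mem_nhds (hS s hs).2)).add_const 1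
  have A := relax_upper_aux S (δ / 2) hε (fun s => l s + 1) l' hd (by
    intro s hs
    have := heq s (hS s hs).2.le
    have := (hb s hs).2
    linarith)
  have B := relax_upper_aux S (δ / 2) hε (fun s => -(l s + 1)) (fun s => - l' s)
    (fun s hs => (hd s hs).neg) (by
    intro s hs
    have := heq s (hS s hs).2.le
    have := (hb s hs).1
    linarith)
  filter_upwards [A, B] with s h1 h2
  rw [Real.dist_eq, abs_lt]
  constructor <;> linarith
end

section
/- Let s₀ > 0 and let μ : [s₀, ∞) → ℝ be continuously differentiable with μ(s)/s² → 0 as s → ∞. Suppose μ'(s) = −(μ(s) + 2)·s + e(s) for all s ≥ s₀, where e : [s₀, ∞) → ℝ satisfies e(s)/s → 0 as s → ∞. Then μ(s) → −2 as s → ∞. -/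
open Set Filter

theorem relax_aux (S ε : ℝ) (hε : 0 < ε) (v e : ℝ → ℝ)
    (hv : ∀ s ∈ Ici S, HasDerivAt v (-(v s) * s + e s) s)
    (he : ∀ s ∈ Ici S, e s ≤ ε * s) :
    ∀ᶠ s in atTop, v s < 2 * ε := by
  have hd : ∀ s ∈ Ici S, HasDerivAt (fun s => (v s - ε) * Real.exp (s ^ 2 / 2))
      ((e s - ε * s) * Real.exp (s ^ 2 / 2)) s := by
    intro s hs
    have h1 : HasDerivAt (fun s : ℝ => s ^ 2 / 2) s s := by
      have := (hasDerivAt_pow 2 s).div_const 2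
      exact this.congr_deriv (by norm_num)
    have := ((hv s hs).sub_const ε).mul h1.exp
    exact this.congr_deriv (by ring)
  have hanti : AntitoneOn (fun s => (v s - ε) * Real.exp (s ^ 2 / 2)) (Ici S) := by
    apply antitoneOn_of_deriv_nonpos (convex_Ici S)
    · exact fun s hs => (hd s hs).continuousAt.continuousWithinAt
    · intro s hs
      exact (hd s (interior_subset hs)).differentiableAt.differentiableWithinAt
    · intro s hs
      rw [(hd s (interior_subset hs)).deriv]
      exact mul_nonpos_of_nonpos_of_nonneg (by linarith [he s (interior_subset hs)])
        (Real.exp_pos _).le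
  have hT : Tendsto (fun s : ℝ => ε * Real.exp (s ^ 2 / 2)) atTop atTop := by
    apply Tendsto.const_mul_atTop hε
    apply Real.tendsto_exp_atTop.comp
    exact (tendsto_pow_atTop two_ne_zero).atTop_div_const two_pos
  filter_upwards [eventually_ge_atTop S,
    hT.eventually_gt_atTop ((v S - ε) * Real.exp (S ^ 2 / 2))] with s hs h
  have h2 := hanti (mem_Ici.2 le_rfl) (mem_Ici.2 hs) hs
  have h3 := lt_of_mul_lt_mul_right (lt_of_le_of_lt h2 h) (Real.exp_pos _).le
  linarith



/-- Second relaxation step: a sub-quadratic solution of `μ' = −(μ + 2)s + o(s)`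
converges to the equilibrium value `−2`. -/
theorem subquadratic_relaxation_to_neg_two
    (s₀ : ℝ) (hs₀ : 0 < s₀)
    (μ μ' e : ℝ → ℝ)
    (hμ : ∀ s ∈ Ici s₀, HasDerivWithinAt μ (μ' s) (Ici s₀) s)
    (hμ' : ContinuousOn μ' (Ici s₀))
    (hsub : Tendsto (fun s => μ s / s ^ 2) atTop (nhds 0))
    (heq : ∀ s ∈ Ici s₀, μ' s = -(μ s + 2) * s + e s)
    (he : Tendsto (fun s => e s / s) atTop (nhds 0)) :
    Tendsto μ atTop (nhds (-2)) := by
  rw [Metric.tendsto_nhds]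
  intro δ hδ
  have h1 := (Metric.tendsto_nhds.1 he) (δ / 2) (by positivity)
  obtain ⟨S, hS⟩ := eventually_atTop.1 (h1.and (eventually_gt_atTop s₀))
  have hb : ∀ s ∈ Ici S, |e s| ≤ δ / 2 * s := by
    intro s hs
    obtain ⟨h, h'⟩ := hS s hs
    have hp : 0 < s := hs₀.trans h'
    rw [Real.dist_eq, sub_zero, abs_div, abs_of_pos hp, div_lt_iff₀ hp] at h
    exact h.le
  have hD : ∀ s ∈ Ici S, HasDerivAt (fun s => μ s + 2) (-(μ s + 2) * s + e s) s := by
    intro s hs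
    have h' := (hS s hs).2
    have := ((hμ s h'.le).hasDerivAt (Ici_mem_nhds h')).add_const 2
    rwa [heq s h'.le] at this
  have hA := relax_aux S (δ / 2) (by positivity) (fun s => μ s + 2) e hD
    (fun s hs => (abs_le.1 (hb s hs)).2)
  have hB := relax_aux S (δ / 2) (by positivity) (fun s => -(μ s + 2)) (fun s => - e s)
    (fun s hs => by
      have := (hD s hs).neg
      exact this.congr_deriv (by ring))
    (fun s hs => by linarith [(abs_le.1 (hb s hs)).1])
  filter_upwards [hA, hB] with s ha hb
  rw [Real.dist_eq, abs_lt]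
  constructor <;> linarith
end

section
/- Let z₀ > 1 and C > 0. Let f : [z₀, ∞) → ℝ be twice continuously differentiable with f'(z) > 0 and f(z) > 0 for all z ≥ z₀, f(z) → ∞ as z → ∞, and f(z)² ≤ 8z for all z ≥ z₀. Suppose f satisfies −f'(z) = (1 + a(z))·f''(z)/(1 + f'(z)²) − 1/f(z) + b(z) for all z ≥ z₀, where a, b : ℝ → ℝ are continuous with |a(z)| + |b(z)| ≤ C/z^10 for all z ≥ z₀. Let z : [f(z₀), ∞) → ℝ be the inverse function of f. Then z is twice continuously differentiable and satisfies 1 = (1 + α(s))·z''(s)/(1 + z'(s)²) + (1/s + β(s))·z'(s) for all s ≥ f(z₀), where α(s) = a(z(s)) and β(s) = −b(z(s)) satisfy |α(s)| + |β(s)| ≤ C'/s^20 for some constant C' > 0 and all s large enough. -/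
open Set Filter

/-- Change of variables: if the radius function `f(z)` of the cylindrical end
satisfies the perturbed rotationally symmetric translator ODE, is increasing,
positive, tends to infinity and satisfies `f(z)² ≤ 8z`, then its inverse `g(s)`
is `C²` and satisfies the perturbed graphical rotationally symmetric translator
equation, with error terms `α(s) = a(g(s))`, `β(s) = −b(g(s))` decaying like `s⁻²⁰`. -/
theorem inverse_function_graphical_translator_ode
    (z₀ C : ℝ) (hz₀ : 1 < z₀) (hC : 0 < C)
    (f f' f'' a b g : ℝ → ℝ)
    (hf : ∀ z ∈ Ici z₀, HasDerivWithinAt f (f' z) (Ici z₀) z)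
    (hf'd : ∀ z ∈ Ici z₀, HasDerivWithinAt f' (f'' z) (Ici z₀) z)
    (hf'' : ContinuousOn f'' (Ici z₀))
    (hf'pos : ∀ z ∈ Ici z₀, 0 < f' z)
    (hfpos : ∀ z ∈ Ici z₀, 0 < f z)
    (hftop : Tendsto f atTop atTop)
    (hfsq : ∀ z ∈ Ici z₀, f z ^ 2 ≤ 8 * z)
    (ha : Continuous a) (hb : Continuous b)
    (hab : ∀ z ∈ Ici z₀, |a z| + |b z| ≤ C / z ^ 10)
    (hode : ∀ z ∈ Ici z₀,
      -f' z = (1 + a z) * f'' z / (1 + f' z ^ 2) - 1 / f z + b z)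
    (hg1 : ∀ z ∈ Ici z₀, g (f z) = z)
    (hg2 : ∀ s ∈ Ici (f z₀), g s ∈ Ici z₀ ∧ f (g s) = s) :
    ∃ g' g'' : ℝ → ℝ,
      (∀ s ∈ Ici (f z₀), HasDerivWithinAt g (g' s) (Ici (f z₀)) s) ∧
      (∀ s ∈ Ici (f z₀), HasDerivWithinAt g' (g'' s) (Ici (f z₀)) s) ∧
      ContinuousOn g'' (Ici (f z₀)) ∧
      (∀ s ∈ Ici (f z₀),
        1 = (1 + a (g s)) * g'' s / (1 + g' s ^ 2) + (1 / s + -b (g s)) * g' s) ∧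
      ∃ C' > (0 : ℝ), ∃ s₁, ∀ s ≥ s₁,
        |a (g s)| + |(-b (g s))| ≤ C' / s ^ 20 := by
  have hfc : ContinuousOn f (Ici z₀) := fun z hz => (hf z hz).continuousWithinAt
  have hmono : StrictMonoOn f (Ici z₀) := by
    refine strictMonoOn_of_hasDerivWithinAt_pos (f' := f') (convex_Ici z₀) hfc ?_ ?_
    · intro x hx
      exact (hf x (interior_subset hx)).mono interior_subset
    · intro x hx
      exact hf'pos x (interior_subset hx)
  have hmaps : MapsTo g (Ici (f z₀)) (Ici z₀) := fun s hs => (hg2 s hs).1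
  have hgc : ContinuousOn g (Ici (f z₀)) := by
    intro s hs
    obtain ⟨h1, h2⟩ := hg2 s hs
    refine tendsto_order.2 ⟨fun c hc => ?_, fun c hc => ?_⟩
    · by_cases hcz : c < z₀
      · filter_upwards [self_mem_nhdsWithin] with y hy
        exact lt_of_lt_of_le hcz (hg2 y hy).1
      · have hcz' : c ∈ Ici z₀ := not_lt.1 hcz
        have h3 : f c < s := h2 ▸ hmono hcz' h1 hc
        filter_upwards [self_mem_nhdsWithin, mem_nhdsWithin_of_mem_nhds (Ioi_mem_nhds h3)]
          with y hy hy2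
        obtain ⟨h4, h5⟩ := hg2 y hy
        exact (hmono.lt_iff_lt hcz' h4).1 (by rw [h5]; exact hy2)
    · have hcz' : c ∈ Ici z₀ := le_trans h1 hc.le
      have h3 : s < f c := h2 ▸ hmono h1 hcz' hc
      filter_upwards [self_mem_nhdsWithin, mem_nhdsWithin_of_mem_nhds (Iio_mem_nhds h3)]
        with y hy hy2
      obtain ⟨h4, h5⟩ := hg2 y hy
      exact (hmono.lt_iff_lt h4 hcz').1 (by rw [h5]; exact hy2)
  have hgd : ∀ s ∈ Ici (f z₀), HasDerivWithinAt g ((f' (g s))⁻¹) (Ici (f z₀)) s := by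
    intro s hs
    have hne := (hf'pos _ (hmaps hs)).ne'
    have h1 : HasFDerivWithinAt f
        (ContinuousLinearEquiv.unitsEquivAut ℝ (Units.mk0 (f' (g s)) hne) : ℝ →L[ℝ] ℝ)
        (Ici z₀) (g s) := by
      refine (hf _ (hmaps hs)).hasFDerivWithinAt.congr_fderiv ?_
      ext; simp
    have h2 := HasFDerivWithinAt.of_local_left_inverse (g := g) (s := Ici (f z₀)) (a := s)
      ((hgc s hs).tendsto_nhdsWithin hmaps) h1 hs
      (by filter_upwards [self_mem_nhdsWithin] with y hy using (hg2 y hy).2)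
    have h3 := h2.hasDerivWithinAt
    refine h3.congr_deriv ?_
    simp
  refine ⟨fun s => (f' (g s))⁻¹, fun s => -f'' (g s) / f' (g s) ^ 3, hgd, ?_, ?_, ?_, ?_⟩
  · intro s hs
    have hne := (hf'pos _ (hmaps hs)).ne'
    have h1 := (HasDerivWithinAt.comp s (hf'd _ (hmaps hs)) (hgd s hs) hmaps).inv hne
    refine h1.congr_deriv ?_
    simp only [Function.comp]
    field_simp
  · have hf'c : ContinuousOn f' (Ici z₀) := fun z hz => (hf'd z hz).continuousWithinAt
    refine ContinuousOn.div (hf''.comp hgc hmaps).neg ((hf'c.comp hgc hmaps).pow 3) ?_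
    intro s hs
    exact pow_ne_zero _ (hf'pos _ (hmaps hs)).ne'
  · intro s hs
    have hp := hf'pos _ (hmaps hs)
    have h := hode _ (hmaps hs)
    rw [(hg2 s hs).2] at h
    have hs0 : 0 < s := lt_of_lt_of_le (hfpos z₀ self_mem_Ici) hs
    have h2 : (1 + a (g s)) * f'' (g s) / (1 + f' (g s) ^ 2)
        = -f' (g s) + 1 / s - b (g s) := by linarith
    have h3 : (1 + a (g s)) * (-f'' (g s) / f' (g s) ^ 3) / (1 + (f' (g s))⁻¹ ^ 2)
        = -((1 + a (g s)) * f'' (g s) / (1 + f' (g s) ^ 2)) / f' (g s) := by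
      field_simp
      ring
    show 1 = (1 + a (g s)) * (-f'' (g s) / f' (g s) ^ 3) / (1 + (f' (g s))⁻¹ ^ 2)
      + (1 / s + -b (g s)) * (f' (g s))⁻¹
    rw [h3, h2]
    field_simp
    ring
  · refine ⟨C * 8 ^ 10, by positivity, f z₀, fun s hs => ?_⟩
    have hs0 : 0 < s := lt_of_lt_of_le (hfpos z₀ self_mem_Ici) hs
    obtain ⟨h1, h2⟩ := hg2 s hs
    have h3 := hfsq _ h1
    rw [h2] at h3
    have hg0 : 0 < g s := by have := mem_Ici.1 h1; linarith
    have h4 : s ^ 20 ≤ 8 ^ 10 * g s ^ 10 := by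
      have := pow_le_pow_left₀ (by positivity) h3 10
      calc s ^ 20 = (s ^ 2) ^ 10 := by ring
        _ ≤ _ := this
        _ = _ := by ring
    rw [abs_neg]
    refine (hab _ h1).trans ?_
    rw [div_le_div_iff₀ (by positivity) (by positivity)]
    calc C * s ^ 20 ≤ C * (8 ^ 10 * g s ^ 10) := by gcongr
      _ = _ := by ring
end

section
/- Let s₀ > 1 and C > 0. Let z : [s₀, ∞) → ℝ be twice continuously differentiable and satisfy 1 = (1 + α(s))·z''(s)/(1 + z'(s)²) + (1/s + β(s))·z'(s) for all s ≥ s₀, where α, β : ℝ → ℝ are continuous with |α(s)| ≤ 1/2 and |α(s)| + |β(s)| ≤ C/s^20 for all s ≥ s₀. Then there exist a constant c ∈ ℝ, a constant C' > 0 and s₁ ≥ s₀ such that |z(s) − (c + s²/2 − log s)| ≤ C'/s for all s ≥ s₁. -/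
open Set Filter

/-- Forward-attraction lemma. -/
lemma reach_aux (h h' : ℝ → ℝ) (a k : ℝ) (ha : 1 ≤ a) (hk : 0 < k)
    (hd : ∀ s ≥ a, HasDerivWithinAt h (h' s) (Ici a) s)
    (hp : ∀ s ≥ a, h s ≤ 0 → k / s ≤ h' s) :
    ∃ b ≥ a, ∀ s ≥ b, 0 ≤ h s := by
  have h1 : ∃ b ≥ a, 0 ≤ h b := by
    by_contra! hneg
    have hmono : MonotoneOn (fun s => h s - k * Real.log s) (Ici a) := by
      have hd2 : ∀ s ≥ a, HasDerivWithinAt (fun s => h s - k * Real.log s)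
          (h' s - k * s⁻¹) (Ici a) s := by
        intro s hs
        have hs0 : s ≠ 0 := by linarith
        exact (hd s hs).sub (((Real.hasDerivAt_log hs0).const_mul k).hasDerivWithinAt)
      apply monotoneOn_of_hasDerivWithinAt_nonneg (convex_Ici a)
      · intro s hs
        exact (hd2 s hs).continuousWithinAt
      · intro s hs
        exact (hd2 s (interior_subset hs)).mono interior_subset
      · intro s hs
        have hs' : s ≥ a := interior_subset hs
        have := hp s hs' (hneg s hs').le
        rw [div_eq_mul_inv] at this
        linarith
    have ht : Tendsto (fun s => h a - k * Real.log a + k * Real.log s) atTop atTop :=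
      tendsto_atTop_add_const_left _ _ (Real.tendsto_log_atTop.const_mul_atTop hk)
    obtain ⟨s, hs1, hs2⟩ := ((ht.eventually_ge_atTop 0).and (eventually_ge_atTop a)).exists
    have h3 := hmono (mem_Ici.2 le_rfl) (mem_Ici.2 hs2) hs2
    have h4 := hneg s hs2
    simp only at h3
    linarith
  obtain ⟨b, hb, hb0⟩ := h1
  refine ⟨b, hb, fun s hs => ?_⟩
  have key := image_le_of_deriv_right_lt_deriv_boundary' (f := fun t => - h t)
    (f' := fun t => - h' t) (a := b) (b := s) (B := fun _ => 0) (B' := fun _ => 0)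
    (fun t ht => ((hd t (hb.trans ht.1)).continuousWithinAt.mono
      (fun u hu => mem_Ici.2 (hb.trans hu.1))).neg)
    (fun t ht => ((hd t (hb.trans ht.1)).mono
      (fun u hu => mem_Ici.2 ((hb.trans ht.1).trans hu))).neg)
    (by simpa using hb0) continuousOn_const
    (fun t _ => hasDerivWithinAt_const _ _ _)
    (by
      intro t ht h0
      have hta : t ≥ a := hb.trans ht.1
      have h0' : h t = 0 := by simpa using h0
      have := hp t hta h0'.le
      have h5 : 0 < k / t := div_pos hk (by linarith)
      linarith)
  have := key (right_mem_Icc.2 hs)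
  linarith

set_option maxHeartbeats 1000000 in
lemma alg_upper (s x w v A B : ℝ) (hx : 0 < x) (hx1 : x ≤ 1 / 100) (hsx : s * x = 1)
    (hA : |A| ≤ x ^ 6) (hB : |B| ≤ x ^ 6)
    (hv : (1 + A) * v = (1 + w ^ 2) * (1 - (x + B) * w))
    (hw : s - x + x ^ 2 ≤ w) : v ≤ 1 + x ^ 2 - 2 * x ^ 3 - x / 4 := by
  obtain ⟨hA1, hA2⟩ := abs_le.1 hA
  obtain ⟨hB1, hB2⟩ := abs_le.1 hB
  have hs : 0 < s := by
    by_contra hcon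
    nlinarith
  have hs100 : 100 ≤ s := by nlinarith
  have hk : ∀ n : ℕ, x ^ (n + 1) ≤ x ^ n / 100 := fun n => by
    rw [pow_succ]
    have := mul_le_mul_of_nonneg_left hx1 (pow_pos hx n).le
    linarith
  have hx2 : x ^ 2 ≤ x / 100 := by simpa using hk 1
  have hx20 : 0 < x ^ 2 := by positivity
  have hx3 : x ^ 3 ≤ x ^ 2 / 100 := hk 2
  have hx30 : 0 < x ^ 3 := by positivity
  have hx4 : x ^ 4 ≤ x ^ 3 / 100 := hk 3
  have hx40 : 0 < x ^ 4 := by positivity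
  have hx5 : x ^ 5 ≤ x ^ 4 / 100 := hk 4
  have hx6 : x ^ 6 ≤ x ^ 5 / 100 := hk 5
  have hx60 : 0 < x ^ 6 := by positivity
  have hx50 : 0 < x ^ 5 := by positivity
  set U := s - x + x ^ 2 with hU
  have hUpos : 0 < U := by linarith
  have hUs : U ≤ s := by linarith
  have hs6 : x ^ 6 * s = x ^ 5 := by
    calc x ^ 6 * s = x ^ 5 * (s * x) := by ring
      _ = x ^ 5 := by rw [hsx, mul_one]
  have hBU : |B * U| ≤ x ^ 5 := by
    rw [abs_mul, abs_of_pos hUpos, ← hs6]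
    gcongr
  obtain ⟨hBU1, hBU2⟩ := abs_le.1 hBU
  have hxU : x * U = 1 - x ^ 2 + x ^ 3 := by rw [hU]; linear_combination hsx
  have hbU : (x + B) * U = 1 - x ^ 2 + x ^ 3 + B * U := by rw [add_mul, hxU]
  have hb0 : 0 < x + B := by linarith
  have hbU' : 0.99 ≤ (x + B) * U := by rw [hbU]; norm_num; linarith
  have hbw : 0.99 ≤ (x + B) * w := hbU'.trans (by gcongr)
  have hw0 : 0 < w := hUpos.trans_le hw
  have hq : 0 ≤ (x + B) * (U ^ 2 + U * w + w ^ 2 + 1) - (U + w) := by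
    have e1 : 0.99 * (U + w) ≤ (x + B) * U * (U + w) := by gcongr
    have e2 : 0.99 * w ≤ (x + B) * w * w := by gcongr
    norm_num at e1 e2
    have e3 : (x + B) * (U ^ 2 + U * w + w ^ 2 + 1) - (U + w)
        = (x + B) * U * (U + w) + (x + B) * w * w + (x + B) - (U + w) := by ring
    rw [e3]
    linarith
  have hg : (1 + w ^ 2) * (1 - (x + B) * w) ≤ (1 + U ^ 2) * (1 - (x + B) * U) := by
    have e4 := mul_nonneg (sub_nonneg.2 hw) hq
    have e5 : (1 + U ^ 2) * (1 - (x + B) * U) - (1 + w ^ 2) * (1 - (x + B) * w) = (w - U) *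
        ((x + B) * (U ^ 2 + U * w + w ^ 2 + 1) - (U + w)) := by ring
    linarith
  have hg2 : (1 + U ^ 2) * (1 - (x + B) * U) ≤ (1 + U ^ 2) * (x ^ 2 - x ^ 3 + x ^ 5) := by
    refine mul_le_mul_of_nonneg_left ?_ (by positivity)
    rw [hbU]; linarith
  have hxx : (1 + U ^ 2) * x ^ 2 = x ^ 2 + (1 - x ^ 2 + x ^ 3) ^ 2 := by rw [← hxU]; ring
  have hg3 : (1 + U ^ 2) * (x ^ 2 - x ^ 3 + x ^ 5) ≤ 1 - x + x ^ 3 := by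
    have : (1 + U ^ 2) * x ^ 2 ≤ 1 := by
      have e : x ^ 2 + (1 - x ^ 2 + x ^ 3) ^ 2 = 1 - x ^ 2 + 2 * x ^ 3 + x ^ 4 - 2 * x ^ 5 + x ^ 6 := by ring
      rw [hxx, e]; linarith
    have h2 : 0 ≤ 1 - x + x ^ 3 := by linarith
    have e6 := mul_le_mul_of_nonneg_right this h2
    have e7 : (1 + U ^ 2) * (x ^ 2 - x ^ 3 + x ^ 5) = (1 + U ^ 2) * x ^ 2 * (1 - x + x ^ 3) := by ring
    linarith
  have hfin : (1 + A) * v ≤ 1 - x + x ^ 3 := by rw [hv]; linarith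
  by_contra hcon
  push Not at hcon
  have hA0 : 0 < 1 + A := by linarith
  have h5 := mul_lt_mul_of_pos_left hcon hA0
  have hT0 : 0 ≤ 1 + x ^ 2 - 2 * x ^ 3 - x / 4 := by linarith
  have hT : x ^ 6 * (1 + x ^ 2 - 2 * x ^ 3 - x / 4) ≤ x ^ 6 * 1 :=
    mul_le_mul_of_nonneg_left (by linarith) hx60.le
  have h6 := mul_le_mul_of_nonneg_right hA1 hT0
  linarith

set_option maxHeartbeats 1000000 in
lemma alg_lower (s x w v A B : ℝ) (hx : 0 < x) (hx1 : x ≤ 1 / 100) (hsx : s * x = 1)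
    (hA : |A| ≤ x ^ 6) (hB : |B| ≤ x ^ 6)
    (hv : (1 + A) * v = (1 + w ^ 2) * (1 - (x + B) * w)) (hw2 : 2 ≤ w)
    (hw : w ≤ s - x - x ^ 2) : 1 + x ^ 2 + 2 * x ^ 3 + x / 4 ≤ v := by
  obtain ⟨hA1, hA2⟩ := abs_le.1 hA
  obtain ⟨hB1, hB2⟩ := abs_le.1 hB
  have hs : 0 < s := by
    by_contra hcon
    nlinarith
  have hs100 : 100 ≤ s := by nlinarith
  have hk : ∀ n : ℕ, x ^ (n + 1) ≤ x ^ n / 100 := fun n => by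
    rw [pow_succ]
    have := mul_le_mul_of_nonneg_left hx1 (pow_pos hx n).le
    linarith
  have hx2 : x ^ 2 ≤ x / 100 := by simpa using hk 1
  have hx20 : 0 < x ^ 2 := by positivity
  have hx3 : x ^ 3 ≤ x ^ 2 / 100 := hk 2
  have hx30 : 0 < x ^ 3 := by positivity
  have hx4 : x ^ 4 ≤ x ^ 3 / 100 := hk 3
  have hx40 : 0 < x ^ 4 := by positivity
  have hx5 : x ^ 5 ≤ x ^ 4 / 100 := hk 4
  have hx6 : x ^ 6 ≤ x ^ 5 / 100 := hk 5
  have hx60 : 0 < x ^ 6 := by positivity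
  have hx50 : 0 < x ^ 5 := by positivity
  set U := s - x - x ^ 2 with hU
  have hUpos : 0 < U := by linarith
  have hUs : U ≤ s := by linarith
  have hs6 : x ^ 6 * s = x ^ 5 := by
    calc x ^ 6 * s = x ^ 5 * (s * x) := by ring
      _ = x ^ 5 := by rw [hsx, mul_one]
  have hb0 : 0 < x + B := by linarith
  have hA0 : 0 < 1 + A := by linarith
  have hfin : 1 + x - 2 * x ^ 2 ≤ (1 + A) * v := by
    rw [hv]
    rcases le_total w (s / 2) with hws | hws
    · have h1 : (x + B) * w ≤ 0.51 := by
        have : (x + B) * w ≤ (x + x ^ 6) * (s / 2) := by gcongr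
        norm_num
        nlinarith
      have h2 : (5:ℝ) ≤ 1 + w ^ 2 := by nlinarith
      norm_num at h1
      nlinarith
    · have hBU : |B * U| ≤ x ^ 5 := by
        rw [abs_mul, abs_of_pos hUpos, ← hs6]
        gcongr
      obtain ⟨hBU1, hBU2⟩ := abs_le.1 hBU
      have hxU : x * U = 1 - x ^ 2 - x ^ 3 := by rw [hU]; linear_combination hsx
      have hbU : (x + B) * U = 1 - x ^ 2 - x ^ 3 + B * U := by rw [add_mul, hxU]
      have hbU' : 0.99 ≤ (x + B) * U := by rw [hbU]; norm_num; linarith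
      have hbw : 0.49 ≤ (x + B) * w := by
        have : (x - x ^ 6) * (s / 2) ≤ (x + B) * w := by
          have : 0 ≤ x - x ^ 6 := by linarith
          gcongr
          linarith
        norm_num
        nlinarith
      have hw0 : 0 < w := by linarith
      have hq : 0 ≤ (x + B) * (U ^ 2 + U * w + w ^ 2 + 1) - (U + w) := by
        have e1 : 0.99 * (U + w) ≤ (x + B) * U * (U + w) := by gcongr
        have e2 : 0.49 * w ≤ (x + B) * w * w := by gcongr
        norm_num at e1 e2
        have e3 : (x + B) * (U ^ 2 + U * w + w ^ 2 + 1) - (U + w)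
            = (x + B) * U * (U + w) + (x + B) * w * w + (x + B) - (U + w) := by ring
        rw [e3]
        linarith
      have hg : (1 + U ^ 2) * (1 - (x + B) * U) ≤ (1 + w ^ 2) * (1 - (x + B) * w) := by
        have e4 := mul_nonneg (sub_nonneg.2 hw) hq
        have e5 : (1 + w ^ 2) * (1 - (x + B) * w) - (1 + U ^ 2) * (1 - (x + B) * U) = (U - w) *
            ((x + B) * (U ^ 2 + U * w + w ^ 2 + 1) - (U + w)) := by ring
        linarith
      have hg2 : (1 + U ^ 2) * (x ^ 2 + x ^ 3 - x ^ 5) ≤ (1 + U ^ 2) * (1 - (x + B) * U) := by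
        refine mul_le_mul_of_nonneg_left ?_ (by positivity)
        rw [hbU]; linarith
      have hxx : (1 + U ^ 2) * x ^ 2 = x ^ 2 + (1 - x ^ 2 - x ^ 3) ^ 2 := by rw [← hxU]; ring
      have hg3 : 1 + x - 2 * x ^ 2 ≤ (1 + U ^ 2) * (x ^ 2 + x ^ 3 - x ^ 5) := by
        have : 1 - x ^ 2 - 2 * x ^ 3 ≤ (1 + U ^ 2) * x ^ 2 := by
          have e : x ^ 2 + (1 - x ^ 2 - x ^ 3) ^ 2 = 1 - x ^ 2 - 2 * x ^ 3 + (x ^ 2 + x ^ 3) ^ 2 := by ring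
          rw [hxx, e]; linarith [sq_nonneg (x ^ 2 + x ^ 3)]
        have h2 : 0 ≤ 1 + x - x ^ 3 := by linarith
        have e6 := mul_le_mul_of_nonneg_right this h2
        have e7 : (1 + U ^ 2) * (x ^ 2 + x ^ 3 - x ^ 5) = (1 + U ^ 2) * x ^ 2 * (1 + x - x ^ 3) := by ring
        have e8 : (1 - x ^ 2 - 2 * x ^ 3) * (1 + x - x ^ 3) =
          1 + x - x ^ 2 - 4 * x ^ 3 - 2 * x ^ 4 + x ^ 5 + 2 * x ^ 6 := by ring
        linarith
      linarith
  by_contra hcon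
  push Not at hcon
  have h5 := mul_lt_mul_of_pos_left hcon hA0
  have hT0 : 0 ≤ 1 + x ^ 2 + 2 * x ^ 3 + x / 4 := by linarith
  have hT : x ^ 6 * (1 + x ^ 2 + 2 * x ^ 3 + x / 4) ≤ x ^ 6 * 2 :=
    mul_le_mul_of_nonneg_left (by linarith) hx60.le
  have h6 := mul_le_mul_of_nonneg_right hA2 hT0
  linarith

lemma alg_two (s x w v A B : ℝ) (hx : 0 < x) (hx1 : x ≤ 1 / 100)
    (hA : |A| ≤ x ^ 6) (hB : |B| ≤ x ^ 6)
    (hv : (1 + A) * v = (1 + w ^ 2) * (1 - (x + B) * w)) (hw2 : w ≤ 2) : x ≤ v := by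
  obtain ⟨hA1, hA2⟩ := abs_le.1 hA
  obtain ⟨hB1, hB2⟩ := abs_le.1 hB
  have hx6 : x ^ 6 ≤ x / 100 := by
    have : x ^ 5 ≤ (1/100) ^ 5 := by gcongr
    norm_num at this
    nlinarith
  have hb0 : 0 < x + B := by linarith
  have hA0 : 0 < 1 + A := by linarith
  have h1 : (x + B) * w ≤ (x + B) * 2 := by gcongr
  have h2 : (9/10 : ℝ) ≤ (1 + A) * v := by
    rw [hv]; nlinarith [sq_nonneg w]
  by_contra hcon
  push Not at hcon
  have h5 := mul_lt_mul_of_pos_left hcon hA0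
  nlinarith

/-- Any global solution of the perturbed graphical rotationally symmetric translator
equation has the bowl soliton asymptotics `z(s) = c + s²/2 − log s + O(1/s)`. -/
theorem graphical_translator_bowl_asymptotics
    (s₀ C : ℝ) (hs₀ : 1 < s₀) (hC : 0 < C)
    (z z' z'' α β : ℝ → ℝ)
    (hz : ∀ s ∈ Ici s₀, HasDerivWithinAt z (z' s) (Ici s₀) s)
    (hz' : ∀ s ∈ Ici s₀, HasDerivWithinAt z' (z'' s) (Ici s₀) s)
    (hz'' : ContinuousOn z'' (Ici s₀))
    (hα : Continuous α) (hβ : Continuous β)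
    (hαhalf : ∀ s ∈ Ici s₀, |α s| ≤ 1 / 2)
    (hαβ : ∀ s ∈ Ici s₀, |α s| + |β s| ≤ C / s ^ 20)
    (heq : ∀ s ∈ Ici s₀,
      1 = (1 + α s) * z'' s / (1 + z' s ^ 2) + (1 / s + β s) * z' s) :
    ∃ c : ℝ, ∃ C' > (0 : ℝ), ∃ s₁, s₀ ≤ s₁ ∧
      ∀ s ≥ s₁, |z s - (c + s ^ 2 / 2 - Real.log s)| ≤ C' / s := by
  obtain ⟨S, hS0, hSC, hS100⟩ : ∃ S, s₀ ≤ S ∧ C ≤ S ∧ 100 ≤ S :=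
    ⟨max s₀ (max C 100), le_max_left _ _, (le_max_left _ _).trans (le_max_right _ _),
      (le_max_right _ _).trans (le_max_right _ _)⟩
  have hdw : ∀ a ≥ S, ∀ s ≥ a, HasDerivWithinAt z' (z'' s) (Ici a) s := fun a ha s hs =>
    (hz' s (hS0.trans (ha.trans hs))).mono (Ici_subset_Ici.2 (hS0.trans ha))
  have hx : ∀ s ≥ S, 0 < s⁻¹ := fun s hs => inv_pos.2 (by linarith)
  have hx1 : ∀ s ≥ S, s⁻¹ ≤ 1 / 100 := fun s hs => by
    rw [one_div]; exact inv_anti₀ (by norm_num) (by linarith)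
  have hsx : ∀ s ≥ S, s * s⁻¹ = 1 := fun s hs => mul_inv_cancel₀ (by linarith)
  have hsm : ∀ s ≥ S, |α s| + |β s| ≤ s⁻¹ ^ 6 := fun s hs => by
    refine (hαβ s (hS0.trans hs)).trans ?_
    have hs0 : 0 < s := by linarith
    rw [inv_pow, ← one_div, div_le_div_iff₀ (by positivity) (by positivity)]
    have h1 : s ^ 7 ≤ s ^ 20 := pow_le_pow_right₀ (by linarith) (by norm_num)
    have h2 : C * s ^ 6 ≤ s * s ^ 6 := by gcongr; linarith
    nlinarith
  have hA : ∀ s ≥ S, |α s| ≤ s⁻¹ ^ 6 := fun s hs => by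
    linarith [hsm s hs, abs_nonneg (β s)]
  have hB : ∀ s ≥ S, |β s| ≤ s⁻¹ ^ 6 := fun s hs => by
    linarith [hsm s hs, abs_nonneg (α s)]
  have hv : ∀ s ≥ S, (1 + α s) * z'' s = (1 + z' s ^ 2) * (1 - (s⁻¹ + β s) * z' s) :=
    fun s hs => by
      have h := heq s (hS0.trans hs)
      have hp : (1 + z' s ^ 2) ≠ 0 := by positivity
      have h2 : (1 + α s) * z'' s / (1 + z' s ^ 2) = 1 - (s⁻¹ + β s) * z' s := by
        rw [← one_div]; linarith
      rw [div_eq_iff hp] at h2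
      rw [h2]; ring
  -- stage 1
  obtain ⟨a, haS, ha⟩ := reach_aux (fun s => z' s - 2) z'' S 1 (by linarith) one_pos
    (fun s hs => (hdw S le_rfl s hs).sub_const 2)
    (fun s hs h => by
      rw [one_div]
      exact alg_two s s⁻¹ (z' s) _ _ _ (hx s hs) (hx1 s hs) (hA s hs) (hB s hs) (hv s hs)
        (by linarith))
  have dinv : ∀ s ≥ S, HasDerivAt (fun s : ℝ => s⁻¹) (-(s⁻¹ ^ 2)) s := fun s hs => by
    have := hasDerivAt_inv (x := s) (by linarith)
    simpa using this
  -- stage 2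
  obtain ⟨b, hba, hb⟩ := reach_aux (fun s => z' s - (s - s⁻¹ - s⁻¹ ^ 2))
    (fun s => z'' s - (1 + s⁻¹ ^ 2 + 2 * s⁻¹ ^ 3)) a (1/4) (by linarith) (by norm_num)
    (fun s hs => by
      have hd := dinv s (haS.trans hs)
      have h2 := ((hasDerivAt_id s).sub hd).sub (hd.pow 2)
      refine (hdw a haS s hs).sub (h2.hasDerivWithinAt.congr_deriv ?_)
      simp; ring)
    (fun s hs h => by
      have hs' := haS.trans hs
      have := alg_lower s s⁻¹ (z' s) _ _ _ (hx s hs') (hx1 s hs') (hsx s hs') (hA s hs')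
        (hB s hs') (hv s hs') (by linarith [ha s hs]) (by linarith)
      have e : (1/4 : ℝ) / s = s⁻¹ / 4 := by ring
      rw [e]; linarith)
  -- stage 3
  obtain ⟨d, hdb, hd⟩ := reach_aux (fun s => (s - s⁻¹ + s⁻¹ ^ 2) - z' s)
    (fun s => (1 + s⁻¹ ^ 2 - 2 * s⁻¹ ^ 3) - z'' s) b (1/4) (by linarith) (by norm_num)
    (fun s hs => by
      have hd := dinv s ((haS.trans hba).trans hs)
      have h2 := ((hasDerivAt_id s).sub hd).add (hd.pow 2)
      refine HasDerivWithinAt.sub (h2.hasDerivWithinAt.congr_deriv ?_)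
        (hdw b (haS.trans hba) s hs)
      simp; ring)
    (fun s hs h => by
      have hs' := (haS.trans hba).trans hs
      have := alg_upper s s⁻¹ (z' s) _ _ _ (hx s hs') (hx1 s hs') (hsx s hs') (hA s hs')
        (hB s hs') (hv s hs') (by linarith)
      have e : (1/4 : ℝ) / s = s⁻¹ / 4 := by ring
      rw [e]; linarith)
  have hdS : S ≤ d := (haS.trans hba).trans hdb
  -- integration
  have dD : ∀ s ≥ d, HasDerivWithinAt (fun s => z s - s ^ 2 / 2 + Real.log s)
      (z' s - s + s⁻¹) (Ici d) s := fun s hs => by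
    have h1 := (hz s ((hS0.trans hdS).trans hs)).mono (Ici_subset_Ici.2 (hS0.trans hdS))
    have h2 := ((hasDerivAt_id s).pow 2).div_const 2
    have h3 := Real.hasDerivAt_log (x := s) (by linarith)
    refine ((h1.sub h2.hasDerivWithinAt).add h3.hasDerivWithinAt).congr_deriv ?_
    simp
  set D : ℝ → ℝ := fun s => z s - s ^ 2 / 2 + Real.log s with hD
  have hmono : MonotoneOn (fun s => D s - s⁻¹) (Ici d) := by
    have hd2 : ∀ s ≥ d, HasDerivWithinAt (fun s => D s - s⁻¹)
        ((z' s - s + s⁻¹) - -(s⁻¹ ^ 2)) (Ici d) s := fun s hs =>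
      (dD s hs).sub (dinv s (hdS.trans hs)).hasDerivWithinAt
    apply monotoneOn_of_hasDerivWithinAt_nonneg (convex_Ici d)
    · intro s hs
      exact (hd2 s hs).continuousWithinAt
    · intro s hs
      exact (hd2 s (interior_subset hs)).mono interior_subset
    · intro s hs
      have hs' : s ≥ d := interior_subset hs
      linarith [hb s (hdb.trans hs')]
  have hanti : AntitoneOn (fun s => D s + s⁻¹) (Ici d) := by
    have hd2 : ∀ s ≥ d, HasDerivWithinAt (fun s => D s + s⁻¹)
        ((z' s - s + s⁻¹) + -(s⁻¹ ^ 2)) (Ici d) s := fun s hs =>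
      (dD s hs).add (dinv s (hdS.trans hs)).hasDerivWithinAt
    apply antitoneOn_of_hasDerivWithinAt_nonpos (convex_Ici d)
    · intro s hs
      exact (hd2 s hs).continuousWithinAt
    · intro s hs
      exact (hd2 s (interior_subset hs)).mono interior_subset
    · intro s hs
      have hs' : s ≥ d := interior_subset hs
      linarith [hd s hs']
  have hcross : ∀ s ≥ d, ∀ t ≥ d, D s - s⁻¹ ≤ D t + t⁻¹ := fun s hs t ht => by
    have hm : max s t ≥ d := hs.trans (le_max_left _ _)
    have h1 := hmono (mem_Ici.2 hs) (mem_Ici.2 hm) (le_max_left _ _)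
    have h2 := hanti (mem_Ici.2 ht) (mem_Ici.2 hm) (le_max_right _ _)
    have h3 := hx _ (hdS.trans hm)
    simp only at h1 h2
    linarith
  refine ⟨sSup ((fun s => D s - s⁻¹) '' Ici d), 1, one_pos, d, hS0.trans hdS, fun s hs => ?_⟩
  have h1 : D s - s⁻¹ ≤ sSup ((fun s => D s - s⁻¹) '' Ici d) := by
    apply le_csSup
    · refine ⟨D d + d⁻¹, ?_⟩
      rintro _ ⟨t, ht, rfl⟩
      exact hcross t ht d le_rfl
    · exact ⟨s, hs, rfl⟩
  have h2 : sSup ((fun s => D s - s⁻¹) '' Ici d) ≤ D s + s⁻¹ := by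
    apply csSup_le
    · exact ⟨_, d, mem_Ici.2 le_rfl, rfl⟩
    · rintro _ ⟨t, ht, rfl⟩
      exact hcross t ht s hs
  have hDs : D s = z s - s ^ 2 / 2 + Real.log s := rfl
  rw [one_div, abs_le]
  constructor <;> linarith
end
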